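/- arXiv:math/0601254 — 2 statements merged into one kernel-verified Lean document; each statement's English description precedes it below -/
import Mathlib

section
/- (Main Theorem) Let L be a completely distributive commutative subspace lattice on a complex separable Hilbert space H and let Φ : Alg L → Alg L be a linear map that is continuous with respect to the weak operator topology and rank preserving, and such that every element of F is consistent with respect to Φ. Then there exist densely defined linear transformations U and V on H such that Φ(A) = U A V* for all A ∈ Alg L, in the sense that: (i) Φ(x⊗f*) = (Ux)⊗(Vf)* whenever x ∈ dom U, f ∈ dom V, and x ∈ M, f ∈ M₋^⊥ for some M ∈ F; and (ii) ⟨Φ(A)h, k⟩ = ⟨A(V*h), U*k⟩ for every A ∈ Alg L, every h in the domain of V*, and every k in the domain of U*. -/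
open scoped InnerProductSpace

noncomputable section

/-- The join (closed linear span) of a family of subspaces of a Hilbert space. -/
def closedJoin {H : Type*} [NormedAddCommGroup H] [InnerProductSpace ℂ H]
    (S : Set (Submodule ℂ H)) : Submodule ℂ H :=
  (sSup S).topologicalClosure

/-- A subspace lattice on `H`: a family of closed subspaces containing `{0}` and `H`,
closed under arbitrary intersections and arbitrary closed linear spans. -/
structure IsSubspaceLattice {H : Type*} [NormedAddCommGroup H] [InnerProductSpace ℂ H]
    (L : Set (Submodule ℂ H)) : Prop where
  isClosed : ∀ E ∈ L, IsClosed (E : Set H)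
  bot_mem : ⊥ ∈ L
  top_mem : ⊤ ∈ L
  sInf_mem : ∀ S : Set (Submodule ℂ H), S ⊆ L → sInf S ∈ L
  join_mem : ∀ S : Set (Submodule ℂ H), S ⊆ L → closedJoin S ∈ L

/-- `M₋`: the join of all members of `L` that do not contain `M`. -/
def minus {H : Type*} [NormedAddCommGroup H] [InnerProductSpace ℂ H]
    (L : Set (Submodule ℂ H)) (M : Submodule ℂ H) : Submodule ℂ H :=
  closedJoin {E | E ∈ L ∧ ¬ M ≤ E}

open Classical in
/-- The orthogonal projection of `H` onto a closed subspace `E`, as an operator on `H`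
(junk value `0` if `E` is not closed). -/
def projOf {H : Type*} [NormedAddCommGroup H] [InnerProductSpace ℂ H] [CompleteSpace H]
    (E : Submodule ℂ H) : H →L[ℂ] H :=
  if h : IsClosed (E : Set H) then
    haveI : CompleteSpace E := h.completeSpace_coe
    E.subtypeL.comp (Submodule.orthogonalProjectionOnto E)
  else 0

/-- A commutative subspace lattice: the orthogonal projections onto members commute. -/
structure IsCSL {H : Type*} [NormedAddCommGroup H] [InnerProductSpace ℂ H] [CompleteSpace H]
    (L : Set (Submodule ℂ H)) extends IsSubspaceLattice L : Prop where
  commutes : ∀ E ∈ L, ∀ F ∈ L, projOf E * projOf F = projOf F * projOf E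

/-- Complete distributivity of the lattice `L` (meets are intersections, joins are
closed linear spans). -/
def IsCompletelyDistributive {H : Type*} [NormedAddCommGroup H] [InnerProductSpace ℂ H]
    (L : Set (Submodule ℂ H)) : Prop :=
  ∀ (I : Type) (J : I → Type) (E : (i : I) → J i → Submodule ℂ H),
    (∀ i j, E i j ∈ L) →
     ((⨅ i, closedJoin (Set.range (E i)))
        = closedJoin (Set.range fun φ : (∀ i, J i) => ⨅ i, E i (φ i)))
    ∧ (closedJoin (Set.range fun i => ⨅ j, E i j)
        = ⨅ φ : (∀ i, J i), closedJoin (Set.range fun i => E i (φ i)))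

/-- `Alg L`: all bounded operators leaving every member of `L` invariant. -/
def algL {H : Type*} [NormedAddCommGroup H] [InnerProductSpace ℂ H]
    (L : Set (Submodule ℂ H)) : Set (H →L[ℂ] H) :=
  {T | ∀ E ∈ L, ∀ x ∈ E, T x ∈ E}

/-- The rank one operator `x ⊗ f* : h ↦ ⟨h, f⟩ x`. -/
def rankOne {H : Type*} [NormedAddCommGroup H] [InnerProductSpace ℂ H]
    (x f : H) : H →L[ℂ] H :=
  (innerSL ℂ f).smulRight x

/-- The rank of a bounded operator: the dimension of its range. -/
def opRank {H : Type*} [NormedAddCommGroup H] [InnerProductSpace ℂ H]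
    (T : H →L[ℂ] H) : Cardinal :=
  Module.rank ℂ (LinearMap.range (T : H →ₗ[ℂ] H))

/-- `Φ` is a linear map of `Alg L` into itself. -/
structure IsLinearOnAlg {H : Type*} [NormedAddCommGroup H] [InnerProductSpace ℂ H]
    (L : Set (Submodule ℂ H)) (Φ : (H →L[ℂ] H) → (H →L[ℂ] H)) : Prop where
  maps : ∀ A ∈ algL L, Φ A ∈ algL L
  map_add : ∀ A ∈ algL L, ∀ B ∈ algL L, Φ (A + B) = Φ A + Φ B
  map_smul : ∀ (c : ℂ), ∀ A ∈ algL L, Φ (c • A) = c • Φ A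

/-- `Φ` preserves the rank of every finite rank operator in `Alg L`. -/
def RankPreserving {H : Type*} [NormedAddCommGroup H] [InnerProductSpace ℂ H]
    (L : Set (Submodule ℂ H)) (Φ : (H →L[ℂ] H) → (H →L[ℂ] H)) : Prop :=
  ∀ A ∈ algL L, opRank A < Cardinal.aleph0 → opRank (Φ A) = opRank A

/-- `a ∼ b`: (nonzero) vectors `a` and `b` are linearly dependent. -/
def Dep {H : Type*} [NormedAddCommGroup H] [InnerProductSpace ℂ H] (a b : H) : Prop :=
  ∃ c : ℂ, c ≠ 0 ∧ b = c • a

/-- `N` is consistent with respect to `Φ`. -/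
def Consistent {H : Type*} [NormedAddCommGroup H] [InnerProductSpace ℂ H]
    (L : Set (Submodule ℂ H)) (Φ : (H →L[ℂ] H) → (H →L[ℂ] H))
    (N : Submodule ℂ H) : Prop :=
  N ≠ ⊥ ∧ minus L N ≠ ⊤ ∧
    ∃ (U : N →ₗ[ℂ] H) (V : ((minus L N)ᗮ : Submodule ℂ H) →ₗ[ℂ] H),
      ∀ (x : N) (f : ((minus L N)ᗮ : Submodule ℂ H)),
        Φ (rankOne (x : H) (f : H)) = rankOne (U x) (V f)

/-- `N` is twisted with respect to `Φ`. -/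
def Twisted {H : Type*} [NormedAddCommGroup H] [InnerProductSpace ℂ H]
    (L : Set (Submodule ℂ H)) (Φ : (H →L[ℂ] H) → (H →L[ℂ] H))
    (N : Submodule ℂ H) : Prop :=
  N ≠ ⊥ ∧ minus L N ≠ ⊤ ∧
    ∃ (U : ((minus L N)ᗮ : Submodule ℂ H) →ₗ⋆[ℂ] H) (V : N →ₗ⋆[ℂ] H),
      ∀ (x : N) (f : ((minus L N)ᗮ : Submodule ℂ H)),
        Φ (rankOne (x : H) (f : H)) = rankOne (U f) (V x)

/-- `N` is isolated: `dim N = 1` and `N^⊥ ∈ L`. -/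
def Isolated {H : Type*} [NormedAddCommGroup H] [InnerProductSpace ℂ H]
    (L : Set (Submodule ℂ H)) (N : Submodule ℂ H) : Prop :=
  Module.rank ℂ N = 1 ∧ Nᗮ ∈ L

/-- The family `F` of all `N ∈ L` with `N ≠ {0}` and `N₋ ≠ H`. -/
def famF {H : Type*} [NormedAddCommGroup H] [InnerProductSpace ℂ H]
    (L : Set (Submodule ℂ H)) : Set (Submodule ℂ H) :=
  {N | N ∈ L ∧ N ≠ ⊥ ∧ minus L N ≠ ⊤}

/-- Subspaces are comparable if one contains the other. -/
def Comparable' {H : Type*} [NormedAddCommGroup H] [InnerProductSpace ℂ H]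
    (M N : Submodule ℂ H) : Prop :=
  M ≤ N ∨ N ≤ M

/-- There is a chain in `F` from `M` to `N`. -/
def ChainConn {H : Type*} [NormedAddCommGroup H] [InnerProductSpace ℂ H]
    (L : Set (Submodule ℂ H)) (M N : Submodule ℂ H) : Prop :=
  ∃ (n : ℕ) (c : Fin (n + 1) → Submodule ℂ H),
    (∀ k, c k ∈ famF L) ∧ c 0 = M ∧ c (Fin.last n) = N ∧
      ∀ k : Fin n, Comparable' (c k.castSucc) (c k.succ)

/-- `𝔊_N`: all members of `F` that can be connected to `N` by a chain. -/
def GSet {H : Type*} [NormedAddCommGroup H] [InnerProductSpace ℂ H]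
    (L : Set (Submodule ℂ H)) (N : Submodule ℂ H) : Set (Submodule ℂ H) :=
  {M | M ∈ famF L ∧ ChainConn L N M}

end


/-- `Φ` is continuous on `Alg L` with respect to the weak operator topology. -/
def WOTContinuousOn {H : Type*} [NormedAddCommGroup H] [InnerProductSpace ℂ H]
    (L : Set (Submodule ℂ H)) (Φ : (H →L[ℂ] H) → (H →L[ℂ] H)) : Prop :=
  ContinuousOn
    (fun A : H →WOT[ℂ] H =>
      ContinuousLinearMapWOT.ofCLM (Φ (ContinuousLinearMapWOT.toCLM A)))
    (ContinuousLinearMapWOT.ofCLM '' algL L)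

open scoped InnerProductSpace
open Filter Topology

section Aux

variable {H : Type*} [NormedAddCommGroup H] [InnerProductSpace ℂ H]

theorem closedJoin_isClosed (S : Set (Submodule ℂ H)) : IsClosed (closedJoin S : Set H) :=
  Submodule.isClosed_topologicalClosure _

theorem le_closedJoin {S : Set (Submodule ℂ H)} {E : Submodule ℂ H} (h : E ∈ S) :
    E ≤ closedJoin S :=
  (le_sSup h).trans (Submodule.le_topologicalClosure _)

theorem closedJoin_le {S : Set (Submodule ℂ H)} {E : Submodule ℂ H}
    (hE : IsClosed (E : Set H)) (h : ∀ K ∈ S, K ≤ E) : closedJoin S ≤ E :=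
  Submodule.topologicalClosure_minimal _ (sSup_le h) hE

theorem minus_mem {L : Set (Submodule ℂ H)} (hL : IsSubspaceLattice L) (M : Submodule ℂ H) :
    minus L M ∈ L :=
  hL.join_mem _ fun _ h => h.1

theorem le_minus {L : Set (Submodule ℂ H)} {M E : Submodule ℂ H} (hE : E ∈ L) (h : ¬ M ≤ E) :
    E ≤ minus L M :=
  le_closedJoin (S := {E | E ∈ L ∧ ¬ M ≤ E}) ⟨hE, h⟩

theorem minus_mono {L : Set (Submodule ℂ H)} {M N : Submodule ℂ H} (h : M ≤ N) :
    minus L M ≤ minus L N :=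
  closedJoin_le (closedJoin_isClosed _) fun _ hK => le_minus hK.1 fun h' => hK.2 (h.trans h')

theorem isClosed_orth (M : Submodule ℂ H) : IsClosed (Mᗮ : Set H) :=
  Submodule.isClosed_orthogonal M

variable [CompleteSpace H]

theorem projOf_mem {E : Submodule ℂ H} (hE : IsClosed (E : Set H)) (x : H) :
    projOf E x ∈ E := by
  rw [projOf, dif_pos hE]
  simp

theorem projOf_eq {E : Submodule ℂ H} (hE : IsClosed (E : Set H))
    [E.HasOrthogonalProjection] : projOf E = E.starProjection := by
  rw [projOf, dif_pos hE]
  rfl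

theorem sub_projOf_mem {E : Submodule ℂ H} (hE : IsClosed (E : Set H)) (x : H) :
    x - projOf E x ∈ Eᗮ := by
  have : CompleteSpace E := hE.completeSpace_coe
  rw [projOf_eq hE]
  exact Submodule.sub_starProjection_mem_orthogonal x

theorem projOf_unique {E : Submodule ℂ H} (hE : IsClosed (E : Set H)) {x y : H}
    (hy : y ∈ E) (h : x - y ∈ Eᗮ) : projOf E x = y := by
  have : CompleteSpace E := hE.completeSpace_coe
  rw [projOf_eq hE]
  exact Submodule.eq_starProjection_of_mem_orthogonal hy h

theorem projOf_self {E : Submodule ℂ H} (hE : IsClosed (E : Set H)) {x : H}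
    (hx : x ∈ E) : projOf E x = x :=
  projOf_unique hE hx (by simp)

theorem projOf_inner {E : Submodule ℂ H} (hE : IsClosed (E : Set H)) (x y : H) :
    (inner ℂ (projOf E x) y : ℂ) = inner ℂ x (projOf E y) := by
  have : CompleteSpace E := hE.completeSpace_coe
  rw [projOf_eq hE]
  exact Submodule.inner_starProjection_left_eq_right E x y

/-- Subspaces invariant under all the projections of the lattice. -/
def BFam (L : Set (Submodule ℂ H)) : Set (Submodule ℂ H) :=
  {E | IsClosed (E : Set H) ∧ ∀ M ∈ L, ∀ x ∈ E, projOf M x ∈ E}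

theorem BFam_of_mem {L : Set (Submodule ℂ H)} (hL : IsCSL L) {E : Submodule ℂ H} (hE : E ∈ L) :
    E ∈ BFam L := by
  have hEc := hL.isClosed E hE
  refine ⟨hEc, fun M hM x hx => ?_⟩
  have h : projOf E (projOf M x) = projOf M (projOf E x) :=
    congrArg (fun T : H →L[ℂ] H => T x) (hL.commutes E hE M hM)
  rw [projOf_self hEc hx] at h
  rw [← h]
  exact projOf_mem hEc _

theorem BFam_orth {L : Set (Submodule ℂ H)} (hL : IsCSL L) {E : Submodule ℂ H}
    (hE : E ∈ BFam L) : Eᗮ ∈ BFam L := by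
  refine ⟨isClosed_orth _, fun M hM x hx => ?_⟩
  rw [Submodule.mem_orthogonal] at hx ⊢
  intro u hu
  rw [← projOf_inner (hL.isClosed M hM)]
  exact hx _ (hE.2 M hM u hu)

theorem BFam_inf {L : Set (Submodule ℂ H)} {E F : Submodule ℂ H}
    (hE : E ∈ BFam L) (hF : F ∈ BFam L) : E ⊓ F ∈ BFam L :=
  ⟨hE.1.inter hF.1, fun M hM x hx => ⟨hE.2 M hM x hx.1, hF.2 M hM x hx.2⟩⟩

theorem BFam_join {L S : Set (Submodule ℂ H)} (hS : S ⊆ BFam L) : closedJoin S ∈ BFam L := by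
  refine ⟨closedJoin_isClosed _, fun M hM => ?_⟩
  have h1 : sSup S ≤ (closedJoin S).comap (projOf M : H →ₗ[ℂ] H) :=
    sSup_le fun K hK x hx => le_closedJoin hK ((hS hK).2 M hM x hx)
  have h2 : closedJoin S ≤ (closedJoin S).comap (projOf M : H →ₗ[ℂ] H) :=
    Submodule.topologicalClosure_minimal _ h1
      ((closedJoin_isClosed S).preimage (projOf M).continuous)
  exact fun x hx => h2 hx

/-! ### Complete distributivity -/

theorem small_closed [TopologicalSpace.SeparableSpace H] (L : Set (Submodule ℂ H))
    (hL : ∀ E ∈ L, IsClosed (E : Set H)) : Small.{0} L := by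
  let d := TopologicalSpace.denseSeq H
  refine small_of_injective (β := ℕ → ℝ)
    (f := fun E : L => fun n => Metric.infDist (d n) ((E : Submodule ℂ H) : Set H)) ?_
  rintro ⟨E, hE⟩ ⟨F, hF⟩ h
  have h1 : (fun x => Metric.infDist x (E : Set H)) = fun x => Metric.infDist x (F : Set H) := by
    refine Continuous.ext_on (TopologicalSpace.denseRange_denseSeq H)
      (Metric.continuous_infDist_pt _) (Metric.continuous_infDist_pt _) ?_
    rintro _ ⟨n, rfl⟩
    exact congrFun h n
  apply Subtype.ext
  ext x
  change x ∈ (E : Set H) ↔ x ∈ (F : Set H)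
  rw [(hL E hE).mem_iff_infDist_zero ⟨0, E.zero_mem⟩, (hL F hF).mem_iff_infDist_zero ⟨0, F.zero_mem⟩]
  have h2 : Metric.infDist x (E : Set H) = Metric.infDist x (F : Set H) := congrFun h1 x
  rw [h2]

theorem cd_le [TopologicalSpace.SeparableSpace H] {L : Set (Submodule ℂ H)}
    (hL : IsSubspaceLattice L) (hcd : IsCompletelyDistributive L) {N : Submodule ℂ H}
    (hN : N ∈ L) (x : H) (hx : ∀ M ∈ L, ¬ M ≤ N → x ∈ minus L M) : x ∈ N := by
  have hs : ∀ S : Set (Submodule ℂ H), S ⊆ L → Small.{0} S := fun S hS =>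
    small_closed S fun E hE => hL.isClosed E (hS hE)
  let SI : Set (Submodule ℂ H) := {M | M ∈ L ∧ ¬ M ≤ N}
  let SJ : Submodule ℂ H → Set (Submodule ℂ H) := fun M => {E | E ∈ L ∧ ¬ M ≤ E}
  have : Small.{0} SI := hs _ fun _ h => h.1
  have : ∀ M, Small.{0} (SJ M) := fun M => hs _ fun _ h => h.1
  let e := equivShrink SI
  let e' := fun M => equivShrink (SJ M)
  have h := (hcd (Shrink SI) (fun i => Shrink (SJ (e.symm i)))
    (fun i j => ((e' _).symm j : Submodule ℂ H)) (fun i j => ((e' _).symm j).2.1)).1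
  have h1 : x ∈ ⨅ i, closedJoin (Set.range fun j : Shrink (SJ (e.symm i)) =>
      ((e' (e.symm i)).symm j : Submodule ℂ H)) := by
    rw [Submodule.mem_iInf]
    intro i
    have h2 : Set.range (fun j : Shrink (SJ (e.symm i)) =>
      ((e' (e.symm i)).symm j : Submodule ℂ H)) = SJ (e.symm i) := by
      ext K
      constructor
      · rintro ⟨j, rfl⟩
        exact ((e' _).symm j).2
      · intro hK
        exact ⟨e' _ ⟨K, hK⟩, by simp⟩
    rw [h2]
    exact hx _ (e.symm i).2.1 (e.symm i).2.2
  rw [h] at h1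
  refine closedJoin_le (hL.isClosed N hN) ?_ h1
  rintro _ ⟨φ, rfl⟩
  by_contra hK
  set K := ⨅ i, ((e' (e.symm i)).symm (φ i) : Submodule ℂ H) with hKdef
  have hKL : K ∈ L := by
    rw [hKdef, ← sInf_range]
    refine hL.sInf_mem _ ?_
    rintro _ ⟨i, rfl⟩
    exact ((e' _).symm (φ i)).2.1
  have h3 := ((e' _).symm (φ (e ⟨K, hKL, hK⟩))).2.2
  apply h3
  have h4 : K ≤ _ := iInf_le (fun i => ((e' (e.symm i)).symm (φ i) : Submodule ℂ H))
    (e ⟨K, hKL, hK⟩)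
  refine le_trans (le_of_eq ?_) h4
  simp

/-- The key covering property. -/
theorem key_cover [TopologicalSpace.SeparableSpace H] {L : Set (Submodule ℂ H)}
    (hL : IsCSL L) (hcd : IsCompletelyDistributive L) {Q : Submodule ℂ H}
    (hQ : Q ∈ BFam L) (hQ0 : Q ≠ ⊥) :
    ∃ M ∈ L, Q ⊓ M ≠ ⊥ ∧ Q ⊓ (minus L M)ᗮ ≠ ⊥ := by
  by_contra! hcon
  let N := closedJoin {M | M ∈ L ∧ M ≤ Qᗮ}
  have hNL : N ∈ L := hL.join_mem _ fun _ h => h.1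
  have hNQ : N ≤ Qᗮ := closedJoin_le (isClosed_orth _) fun _ h => h.2
  apply hQ0
  rw [eq_bot_iff]
  intro q hq
  have hqN : q ∈ N := by
    refine cd_le hL.toIsSubspaceLattice hcd hNL q fun M hM hMN => ?_
    have h1 : ¬ M ≤ Qᗮ := fun h => hMN (le_closedJoin (S := {M | M ∈ L ∧ M ≤ Qᗮ}) ⟨hM, h⟩)
    have h2 : Q ⊓ M ≠ ⊥ := by
      intro h
      apply h1
      intro m hm
      rw [Submodule.mem_orthogonal]
      intro u hu
      have hz : projOf M u ∈ Q ⊓ M := ⟨hQ.2 M hM u hu, projOf_mem (hL.isClosed M hM) u⟩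
      rw [h, Submodule.mem_bot] at hz
      rw [← projOf_self (hL.isClosed M hM) hm, ← projOf_inner (hL.isClosed M hM), hz, inner_zero_left]
    have h3 := hcon M hM h2
    have hmc := hL.isClosed _ (minus_mem hL.toIsSubspaceLattice M)
    have hz : q - projOf (minus L M) q ∈ Q ⊓ (minus L M)ᗮ :=
      ⟨Q.sub_mem hq (hQ.2 _ (minus_mem hL.toIsSubspaceLattice M) q hq), sub_projOf_mem hmc q⟩
    rw [h3, Submodule.mem_bot, sub_eq_zero] at hz
    rw [hz]
    exact projOf_mem hmc q
  have := (Submodule.mem_orthogonal _ _).1 (hNQ hqN) q hq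
  rw [Submodule.mem_bot]
  exact inner_self_eq_zero.1 this

/-- Inside any nonzero invariant subspace there is a nonzero invariant subspace of zero trace. -/
theorem exists_small [TopologicalSpace.SeparableSpace H] {L : Set (Submodule ℂ H)}
    (hL : IsCSL L) (hcd : IsCompletelyDistributive L) {ι : Type*} [Fintype ι] (x y : ι → H)
    (hxy : ∀ M ∈ L, ∀ u ∈ M, ∀ f ∈ (minus L M)ᗮ, ∑ i, (inner ℂ f (x i) : ℂ) * inner ℂ (y i) u = 0)
    {Q₀ : Submodule ℂ H} (hQ : Q₀ ∈ BFam L) (hQ0 : Q₀ ≠ ⊥) :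
    ∃ Q ∈ BFam L, Q ≤ Q₀ ∧ Q ≠ ⊥ ∧ ∑ i, (inner ℂ (projOf Q (x i)) (y i) : ℂ) = 0 := by
  let X : H →ₗ[ℂ] (ι → ℂ) := LinearMap.pi fun i => (innerSL ℂ (x i) : H →ₗ[ℂ] ℂ)
  let Y : H →ₗ[ℂ] (ι → ℂ) := LinearMap.pi fun i => (innerSL ℂ (y i) : H →ₗ[ℂ] ℂ)
  obtain ⟨Q, ⟨hQB, hQQ, hQne⟩, hmin⟩ := exists_minimalFor_of_wellFoundedLT
    (fun Q : Submodule ℂ H => Q ∈ BFam L ∧ Q ≤ Q₀ ∧ Q ≠ ⊥)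
    (fun Q => Module.finrank ℂ (Q.map X) + Module.finrank ℂ (Q.map Y)) ⟨Q₀, hQ, le_rfl, hQ0⟩
  have hst : ∀ R ∈ BFam L, R ≤ Q → R ≠ ⊥ → R.map X = Q.map X ∧ R.map Y = Q.map Y := by
    intro R hR hRQ hR0
    have hX : R.map X ≤ Q.map X := Submodule.map_mono hRQ
    have hY : R.map Y ≤ Q.map Y := Submodule.map_mono hRQ
    have h1 := Submodule.finrank_mono hX
    have h2 := Submodule.finrank_mono hY
    have h3 := hmin ⟨hR, hRQ.trans hQQ, hR0⟩ (Nat.add_le_add h1 h2)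
    simp only at h3
    exact ⟨Submodule.eq_of_le_of_finrank_eq hX (by omega),
      Submodule.eq_of_le_of_finrank_eq hY (by omega)⟩
  refine ⟨Q, hQB, hQQ, hQne, ?_⟩
  obtain ⟨M, hM, h1, h2⟩ := key_cover hL hcd hQB hQne
  have hMm := minus_mem hL.toIsSubspaceLattice M
  have hA := (hst _ (BFam_inf hQB (BFam_orth hL (BFam_of_mem hL hMm))) inf_le_left h2).1
  have hA' := (hst _ (BFam_inf hQB (BFam_of_mem hL hM)) inf_le_left h1).2
  have hz : ∀ f ∈ Q, ∀ u ∈ Q, ∑ i, (inner ℂ f (x i) : ℂ) * inner ℂ (y i) u = 0 := by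
    intro f hf u hu
    have hf' : X f ∈ Q.map X := Submodule.mem_map_of_mem hf
    have hu' : Y u ∈ Q.map Y := Submodule.mem_map_of_mem hu
    rw [← hA] at hf'
    rw [← hA'] at hu'
    obtain ⟨f', hf', hff⟩ := hf'
    obtain ⟨u', hu', huu⟩ := hu'
    rw [← hxy M hM u' hu'.2 f' hf'.2]
    refine Finset.sum_congr rfl fun i _ => ?_
    have e1 : (inner ℂ (x i) f' : ℂ) = inner ℂ (x i) f := congrFun hff i
    have e2 : (inner ℂ (y i) u' : ℂ) = inner ℂ (y i) u := congrFun huu i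
    rw [← inner_conj_symm f, ← inner_conj_symm f', e1, e2]
  obtain ⟨w, b, hb⟩ := exists_hilbertBasis ℂ H
  have hs : HasSum (fun e => ∑ i, (inner ℂ (projOf Q (x i)) (b e) : ℂ) * inner ℂ (b e) (projOf Q (y i)))
      (∑ i, (inner ℂ (projOf Q (x i)) (projOf Q (y i)) : ℂ)) :=
    hasSum_sum fun i _ => b.hasSum_inner_mul_inner _ _
  have h0 : (fun e => ∑ i, (inner ℂ (projOf Q (x i)) (b e) : ℂ) * inner ℂ (b e) (projOf Q (y i)))
      = fun _ => 0 := by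
    funext e
    have := congrArg (starRingEnd ℂ) (hz (projOf Q (b e)) (projOf_mem hQB.1 _) (projOf Q (b e))
      (projOf_mem hQB.1 _))
    rw [map_sum, map_zero] at this
    rw [← this]
    refine Finset.sum_congr rfl fun i _ => ?_
    rw [map_mul, inner_conj_symm, inner_conj_symm, projOf_inner hQB.1, projOf_inner hQB.1]
  rw [h0] at hs
  have := hs.unique hasSum_zero
  rw [← this]
  refine Finset.sum_congr rfl fun i _ => ?_
  rw [← projOf_inner hQB.1, projOf_self hQB.1 (projOf_mem hQB.1 _)]

theorem trace_zero [TopologicalSpace.SeparableSpace H] {L : Set (Submodule ℂ H)}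
    (hL : IsCSL L) (hcd : IsCompletelyDistributive L) {ι : Type*} [Fintype ι] (x y : ι → H)
    (hxy : ∀ M ∈ L, ∀ u ∈ M, ∀ f ∈ (minus L M)ᗮ, ∑ i, (inner ℂ f (x i) : ℂ) * inner ℂ (y i) u = 0) :
    ∑ i, (inner ℂ (x i) (y i) : ℂ) = 0 := by
  let S : Set (Submodule ℂ H) := {Q | Q ∈ BFam L ∧ ∑ i, (inner ℂ (projOf Q (x i)) (y i) : ℂ) = 0}
  have hbot : (⊥ : Submodule ℂ H) ∈ S := by
    refine ⟨BFam_of_mem hL hL.bot_mem, ?_⟩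
    refine Finset.sum_eq_zero fun i _ => ?_
    have := projOf_mem (E := (⊥ : Submodule ℂ H)) (hL.isClosed _ hL.bot_mem) (x i)
    rw [Submodule.mem_bot] at this
    rw [this, inner_zero_left]
  obtain ⟨Q, -, hQ⟩ := zorn_le_nonempty₀ S (by
    intro c hc hchain K hK
    refine ⟨closedJoin c, ⟨BFam_join fun E hE => (hc hE).1, ?_⟩, fun z hz => le_closedJoin hz⟩
    have : Nonempty c := ⟨⟨K, hK⟩⟩
    have : IsDirectedOrder c := ⟨fun a b => by
      rcases hchain.total a.2 b.2 with h | h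
      · exact ⟨b, h, le_rfl⟩
      · exact ⟨a, le_rfl, h⟩⟩
    have : ∀ E : c, ((E : Submodule ℂ H)).HasOrthogonalProjection := fun E => by
      have : CompleteSpace (E : Submodule ℂ H) := (hc E.2).1.1.completeSpace_coe
      infer_instance
    have : (⨆ E : c, (E : Submodule ℂ H)).topologicalClosure.HasOrthogonalProjection := by
      have : CompleteSpace (⨆ E : c, (E : Submodule ℂ H)).topologicalClosure :=
        (Submodule.isClosed_topologicalClosure _).completeSpace_coe
      infer_instance
    have hj : closedJoin c = (⨆ E : c, (E : Submodule ℂ H)).topologicalClosure := by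
      rw [closedJoin, sSup_eq_iSup']
    have ht : ∀ v : H, Tendsto (fun E : c => projOf (E : Submodule ℂ H) v) atTop
        (𝓝 (projOf (closedJoin c) v)) := by
      intro v
      have := Submodule.starProjection_tendsto_closure_iSup (𝕜 := ℂ)
        (fun E : c => (E : Submodule ℂ H)) (fun a b h => h) v
      rw [hj, projOf_eq (Submodule.isClosed_topologicalClosure _)]
      refine this.congr fun E => ?_
      rw [projOf_eq (hc E.2).1.1]
    have ht2 : Tendsto (fun E : c => ∑ i, (inner ℂ (projOf (E : Submodule ℂ H) (x i)) (y i) : ℂ)) atTop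
        (𝓝 (∑ i, (inner ℂ (projOf (closedJoin c) (x i)) (y i) : ℂ))) :=
      tendsto_finsetSum _ fun i _ => (ht (x i)).inner tendsto_const_nhds
    refine tendsto_nhds_unique ht2 ?_
    refine tendsto_const_nhds.congr fun E => ?_
    exact ((hc E.2).2).symm) ⊥ hbot
  have hQS : Q ∈ S := hQ.prop
  have hQB := hQS.1
  by_cases hQo : Qᗮ = ⊥
  · have h1 : ∀ v, projOf Q v = v := fun v => by
      have := sub_projOf_mem hQB.1 v
      rw [hQo, Submodule.mem_bot, sub_eq_zero] at this
      exact this.symm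
    have := hQS.2
    simpa only [h1] using this
  · exfalso
    obtain ⟨R, hRB, hRQ, hR0, hRs⟩ := exists_small hL hcd x y hxy (BFam_orth hL hQB) hQo
    let J := closedJoin {Q, R}
    have hJc : IsClosed (J : Set H) := closedJoin_isClosed _
    have hQJ : Q ≤ J := le_closedJoin (by simp)
    have hRJ : R ≤ J := le_closedJoin (by simp)
    have hJB : J ∈ BFam L := BFam_join (by
      rintro E (rfl | rfl)
      exacts [hQB, hRB])
    have hadd : ∀ v, projOf J v = projOf Q v + projOf R v := by
      intro v
      refine projOf_unique hJc (J.add_mem (hQJ (projOf_mem hQB.1 v)) (hRJ (projOf_mem hRB.1 v))) ?_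
      set z := v - (projOf Q v + projOf R v) with hz
      suffices J ≤ (ℂ ∙ z)ᗮ by
        rw [Submodule.mem_orthogonal']
        intro u hu
        have := this hu
        rw [Submodule.mem_orthogonal] at this
        exact this z (Submodule.mem_span_singleton_self z)
      refine closedJoin_le (isClosed_orth _) ?_
      rintro E (rfl | rfl) u hu
      · rw [Submodule.mem_orthogonal_singleton_iff_inner_right]
        have e1 := (Submodule.mem_orthogonal' _ _).1 (sub_projOf_mem hQB.1 v) u hu
        have e2 := (Submodule.mem_orthogonal' _ _).1 (hRQ (projOf_mem hRB.1 v)) u hu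
        have : z = (v - projOf E v) - projOf R v := by rw [hz]; abel
        rw [this, inner_sub_left, e1, e2, sub_zero]
      · rw [Submodule.mem_orthogonal_singleton_iff_inner_right]
        have e1 := (Submodule.mem_orthogonal' _ _).1 (sub_projOf_mem hRB.1 v) u hu
        have e2 := (Submodule.mem_orthogonal _ _).1 (hRQ hu) _ (projOf_mem hQB.1 v)
        have : z = (v - projOf E v) - projOf Q v := by rw [hz]; abel
        rw [this, inner_sub_left, e1, e2, sub_zero]
    have hJS : J ∈ S := by
      refine ⟨hJB, ?_⟩
      simp only [hadd, inner_add_left, Finset.sum_add_distrib]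
      rw [hQS.2, hRs, add_zero]
    have hJQ : J ≤ Q := hQ.le_of_ge hJS hQJ
    apply hR0
    rw [eq_bot_iff]
    intro r hr
    have := (Submodule.mem_orthogonal _ _).1 (hRQ hr) r (hJQ (hRJ hr))
    rw [Submodule.mem_bot]
    exact inner_self_eq_zero.1 this

end Aux

section Aux2

variable {H : Type*} [NormedAddCommGroup H] [InnerProductSpace ℂ H]

theorem rankOne_apply (x f h : H) : rankOne x f h = (inner ℂ f h : ℂ) • x := rfl

theorem rankOne_mem {L : Set (Submodule ℂ H)} {M : Submodule ℂ H}
    {x f : H} (hx : x ∈ M) (hf : f ∈ (minus L M)ᗮ) : rankOne x f ∈ algL L := by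
  intro E hE h hh
  rw [rankOne_apply]
  by_cases hME : M ≤ E
  · exact E.smul_mem _ (hME hx)
  · rw [(Submodule.mem_orthogonal' _ _).1 hf h (le_minus hE hME hh), zero_smul]
    exact E.zero_mem

theorem rankOne_smul_smul (c : ℂ) (hc : c ≠ 0) (x f : H) :
    rankOne (c • x) ((starRingEnd ℂ c)⁻¹ • f) = rankOne x f := by
  ext h
  rw [rankOne_apply, rankOne_apply, inner_smul_left, map_inv₀, Complex.conj_conj, smul_smul]
  congr 1
  field_simp

theorem rankOne_sub (x y f : H) : rankOne (x - y) f = rankOne x f - rankOne y f := by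
  ext h
  simp [rankOne_apply, smul_sub]

theorem rankOne_eq_zero {x f : H} (h : rankOne x f = 0) : x = 0 ∨ f = 0 := by
  have h1 : rankOne x f f = 0 := by rw [h]; rfl
  rw [rankOne_apply, smul_eq_zero] at h1
  rcases h1 with h1 | h1
  · exact Or.inr (inner_self_eq_zero.1 h1)
  · exact Or.inl h1

theorem opRank_le_of_range {n : ℕ} (T : H →L[ℂ] H) (v : Fin n → H)
    (h : ∀ z, T z ∈ Submodule.span ℂ (Set.range v)) : opRank T ≤ n := by
  have h1 : LinearMap.range (T : H →ₗ[ℂ] H) ≤ Submodule.span ℂ (Set.range v) := by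
    rintro _ ⟨z, rfl⟩
    exact h z
  refine (Submodule.rank_mono h1).trans ?_
  have h2 := finrank_range_le_card (R := ℂ) v
  rw [Set.finrank, Fintype.card_fin] at h2
  have : Module.Finite ℂ (Submodule.span ℂ (Set.range v)) :=
    FiniteDimensional.span_of_finite ℂ (Set.finite_range v)
  rw [← Module.finrank_eq_rank]
  exact_mod_cast h2

theorem le_opRank_of_indep {n : ℕ} (T : H →L[ℂ] H) (v : Fin n → H) (hv : LinearIndependent ℂ v)
    (h : ∀ i, v i ∈ LinearMap.range (T : H →ₗ[ℂ] H)) : (n : Cardinal) ≤ opRank T := by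
  have h2 : Module.rank ℂ (Submodule.span ℂ (Set.range v)) = n := by
    have : Module.Finite ℂ (Submodule.span ℂ (Set.range v)) :=
      FiniteDimensional.span_of_finite ℂ (Set.finite_range v)
    rw [← Module.finrank_eq_rank, finrank_span_eq_card hv, Fintype.card_fin]
  rw [← h2]
  refine Submodule.rank_mono (Submodule.span_le.2 ?_)
  rintro _ ⟨i, rfl⟩
  exact h i

theorem opRank_rankOne_lt (x f : H) : opRank (rankOne x f) < Cardinal.aleph0 := by
  refine lt_of_le_of_lt (opRank_le_of_range (n := 1) _ (fun _ => x) fun z => ?_)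
    (Cardinal.natCast_lt_aleph0)
  rw [rankOne_apply]
  exact Submodule.smul_mem _ _ (Submodule.subset_span ⟨0, rfl⟩)

theorem eq_zero_of_opRank {T : H →L[ℂ] H} (h : opRank T = 0) : T = 0 := by
  have h1 : LinearMap.range (T : H →ₗ[ℂ] H) = ⊥ := Submodule.rank_eq_zero.1 h
  ext z
  have : T z ∈ LinearMap.range (T : H →ₗ[ℂ] H) := ⟨z, rfl⟩
  rw [h1, Submodule.mem_bot] at this
  simpa using this

theorem opRank_zero : opRank (0 : H →L[ℂ] H) = 0 := by
  rw [opRank, Submodule.rank_eq_zero, eq_bot_iff]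
  rintro _ ⟨z, rfl⟩
  simp

theorem image_ne_zero {L : Set (Submodule ℂ H)} {Φ : (H →L[ℂ] H) → (H →L[ℂ] H)}
    (hrank : RankPreserving L Φ) {x f : H} (h : rankOne x f ∈ algL L) (hx : x ≠ 0) (hf : f ≠ 0)
    {y g : H} (hy : Φ (rankOne x f) = rankOne y g) : y ≠ 0 ∧ g ≠ 0 := by
  have h1 : rankOne y g ≠ 0 := by
    intro h0
    have h2 := hrank _ h (opRank_rankOne_lt x f)
    rw [hy, h0, opRank_zero] at h2
    rcases rankOne_eq_zero (eq_zero_of_opRank h2.symm) with h3 | h3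
    exacts [hx h3, hf h3]
  constructor
  · rintro rfl
    apply h1
    ext z
    simp [rankOne_apply]
  · rintro rfl
    apply h1
    ext z
    simp [rankOne_apply]

theorem algL_zero (L : Set (Submodule ℂ H)) : (0 : H →L[ℂ] H) ∈ algL L := by
  intro E _ x _
  simp

theorem algL_add {L : Set (Submodule ℂ H)} {A B : H →L[ℂ] H} (hA : A ∈ algL L) (hB : B ∈ algL L) :
    A + B ∈ algL L := fun E hE x hx => E.add_mem (hA E hE x hx) (hB E hE x hx)

theorem algL_smul {L : Set (Submodule ℂ H)} {A : H →L[ℂ] H} (c : ℂ) (hA : A ∈ algL L) :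
    c • A ∈ algL L := fun E hE x hx => E.smul_mem c (hA E hE x hx)

/-- `Alg L` as a subspace. -/
def algSub (L : Set (Submodule ℂ H)) : Submodule ℂ (H →L[ℂ] H) where
  carrier := algL L
  zero_mem' := algL_zero L
  add_mem' := algL_add
  smul_mem' := fun c _ h => algL_smul c h

/-- The linear map on `Alg L`. -/
def linPhi {L : Set (Submodule ℂ H)} {Φ : (H →L[ℂ] H) → (H →L[ℂ] H)} (hlin : IsLinearOnAlg L Φ) :
    algSub L →ₗ[ℂ] (H →L[ℂ] H) where
  toFun A := Φ A
  map_add' A B := hlin.map_add _ A.2 _ B.2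
  map_smul' c A := hlin.map_smul c _ A.2

theorem phi_sum {L : Set (Submodule ℂ H)} {Φ : (H →L[ℂ] H) → (H →L[ℂ] H)}
    (hlin : IsLinearOnAlg L Φ) (n : ℕ) (A : ℕ → H →L[ℂ] H) (hA : ∀ i < n, A i ∈ algL L) :
    ∑ i ∈ Finset.range n, A i ∈ algL L ∧
      Φ (∑ i ∈ Finset.range n, A i) = ∑ i ∈ Finset.range n, Φ (A i) := by
  induction n with
  | zero =>
    refine ⟨by simpa using algL_zero L, ?_⟩
    have : Φ 0 = 0 := (linPhi hlin).map_zero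
    simpa using this
  | succ n ih =>
    obtain ⟨h1, h2⟩ := ih fun i hi => hA i (by omega)
    rw [Finset.sum_range_succ, Finset.sum_range_succ]
    exact ⟨algL_add h1 (hA n (by omega)), by rw [hlin.map_add _ h1 _ (hA n (by omega)), h2]⟩

theorem phi_sub {L : Set (Submodule ℂ H)} {Φ : (H →L[ℂ] H) → (H →L[ℂ] H)}
    (hlin : IsLinearOnAlg L Φ) {A B : H →L[ℂ] H} (hA : A ∈ algL L) (hB : B ∈ algL L) :
    A - B ∈ algL L ∧ Φ (A - B) = Φ A - Φ B :=
  ⟨(algSub L).sub_mem hA hB, (linPhi hlin).map_sub ⟨A, hA⟩ ⟨B, hB⟩⟩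

theorem loop_rank {L : Set (Submodule ℂ H)} {Φ : (H →L[ℂ] H) → (H →L[ℂ] H)}
    (hlin : IsLinearOnAlg L Φ) (hrank : RankPreserving L Φ) (n : ℕ) (hn : 0 < n)
    (x f y g : ℕ → H) (t : ℂ)
    (hx0 : ∀ i < n, x i ≠ 0) (hf0 : ∀ i < n, f i ≠ 0)
    (hxo : ∀ i < n, ∀ j < n, i ≠ j → (inner ℂ (x i) (x j) : ℂ) = 0)
    (hfo : ∀ i < n, ∀ j < n, i ≠ j → (inner ℂ (f i) (f j) : ℂ) = 0)
    (hA : ∀ i < n, rankOne (x i) (f i) ∈ algL L)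
    (hB : ∀ i < n, rankOne (x (i + 1)) (f i) ∈ algL L)
    (hΦA : ∀ i < n, Φ (rankOne (x i) (f i)) = rankOne (y i) (g i))
    (hΦB : ∀ i < n, Φ (rankOne (x (i + 1)) (f i)) = rankOne (y (i + 1)) (g i))
    (hxn : x n = t • x 0) (hyn : y n = y 0) : t = 1 := by
  by_contra ht
  obtain ⟨m, rfl⟩ : ∃ m, n = m + 1 := ⟨n - 1, by omega⟩
  let T := ∑ i ∈ Finset.range (m + 1), rankOne (x i - x (i + 1)) (f i)
  have hmem : ∀ i < m + 1, rankOne (x i - x (i + 1)) (f i) ∈ algL L := fun i hi => by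
    rw [rankOne_sub]
    exact (phi_sub hlin (hA i hi) (hB i hi)).1
  obtain ⟨hT, hΦT⟩ := phi_sum hlin (m + 1) (fun i => rankOne (x i - x (i + 1)) (f i)) hmem
  have hΦT' : Φ T = ∑ i ∈ Finset.range (m + 1), rankOne (y i - y (i + 1)) (g i) := by
    rw [hΦT]
    refine Finset.sum_congr rfl fun i hi => ?_
    have hi := Finset.mem_range.1 hi
    rw [rankOne_sub, (phi_sub hlin (hA i hi) (hB i hi)).2, hΦA i hi, hΦB i hi, rankOne_sub]
  have happ : ∀ (a b : ℕ → H) (z : H), (∑ i ∈ Finset.range (m + 1), rankOne (a i) (b i)) z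
      = ∑ i ∈ Finset.range (m + 1), (inner ℂ (b i) z : ℂ) • a i := by
    intro a b z
    rw [_root_.sum_apply]
    rfl
  -- finite rank
  have hfin : opRank T < Cardinal.aleph0 := by
    refine lt_of_le_of_lt (opRank_le_of_range (n := m + 1) T (fun i => x i - x (i + 1)) fun z => ?_)
      (Cardinal.natCast_lt_aleph0)
    rw [happ]
    refine Submodule.sum_mem _ fun i hi => Submodule.smul_mem _ _ (Submodule.subset_span ?_)
    exact ⟨⟨i, Finset.mem_range.1 hi⟩, rfl⟩
  have heq := hrank T hT hfin
  -- upper bound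
  have hup : opRank (Φ T) ≤ m := by
    refine opRank_le_of_range (n := m) _ (fun i => y i - y (i + 1)) fun z => ?_
    rw [hΦT', happ]
    have hs : ∀ i < m, y i - y (i + 1) ∈ Submodule.span ℂ
        (Set.range fun i : Fin m => y i - y (i + 1)) := fun i hi =>
      Submodule.subset_span ⟨⟨i, hi⟩, rfl⟩
    refine Submodule.sum_mem _ fun i hi => Submodule.smul_mem _ _ ?_
    rcases Nat.lt_succ_iff_lt_or_eq.1 (Finset.mem_range.1 hi) with h | rfl
    · exact hs i h
    · have e : y i - y (i + 1) = - ∑ j ∈ Finset.range i, (y j - y (j + 1)) := by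
        rw [Finset.sum_range_sub', hyn]
        abel
      rw [e]
      exact Submodule.neg_mem _ (Submodule.sum_mem _ fun j hj => hs j (Finset.mem_range.1 hj))
  -- lower bound
  have hr : ∀ i < m + 1, x i - x (i + 1) ∈ LinearMap.range (T : H →ₗ[ℂ] H) := by
    intro i hi
    have hne : (inner ℂ (f i) (f i) : ℂ) ≠ 0 := inner_self_ne_zero.2 (hf0 i hi)
    refine ⟨(inner ℂ (f i) (f i) : ℂ)⁻¹ • f i, ?_⟩
    rw [ContinuousLinearMap.coe_coe, map_smul, happ, Finset.sum_eq_single i]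
    · rw [smul_smul, inv_mul_cancel₀ hne, one_smul]
    · intro j hj hji
      rw [hfo j (Finset.mem_range.1 hj) i hi hji, zero_smul]
    · intro h
      exact absurd (Finset.mem_range.2 hi) h
  have hx0r : x 0 ∈ LinearMap.range (T : H →ₗ[ℂ] H) := by
    have h1 : ∑ i ∈ Finset.range (m + 1), (x i - x (i + 1)) ∈ LinearMap.range (T : H →ₗ[ℂ] H) :=
      Submodule.sum_mem _ fun i hi => hr i (Finset.mem_range.1 hi)
    rw [Finset.sum_range_sub', hxn] at h1
    have h2 := Submodule.smul_mem _ (1 - t)⁻¹ h1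
    have hne : (1 - t) ≠ 0 := sub_ne_zero.2 (Ne.symm ht)
    have e : (1 - t)⁻¹ • (x 0 - t • x 0) = x 0 := by
      have : x 0 - t • x 0 = (1 - t) • x 0 := by rw [sub_smul, one_smul]
      rw [this, smul_smul, inv_mul_cancel₀ hne, one_smul]
    rwa [e] at h2
  have hxr : ∀ i < m + 1, x i ∈ LinearMap.range (T : H →ₗ[ℂ] H) := by
    intro i hi
    induction i with
    | zero => exact hx0r
    | succ i ih =>
      have := Submodule.sub_mem _ (ih (by omega)) (hr i (by omega))
      simpa using this
  have hind : LinearIndependent ℂ (fun i : Fin (m + 1) => x i) := by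
    refine linearIndependent_of_ne_zero_of_inner_eq_zero (𝕜 := ℂ) (fun i => hx0 i i.2) ?_
    intro i j hij
    exact hxo i i.2 j j.2 fun h => hij (Fin.ext h)
  have hlow := le_opRank_of_indep T _ hind fun i => hxr i i.2
  rw [← heq] at hlow
  have := hlow.trans hup
  norm_cast at this
  omega

end Aux2

section Aux3

variable {H : Type*} [NormedAddCommGroup H] [InnerProductSpace ℂ H]

/-- Walks of a given length along a relation. -/
inductive RWalk {X : Type*} (R : X → X → Prop) : ℕ → X → X → Prop
  | nil (a : X) : RWalk R 0 a a
  | cons {n : ℕ} {a b c : X} (h : R a b) (w : RWalk R n b c) : RWalk R (n + 1) a c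

theorem RWalk.trans {X : Type*} {R : X → X → Prop} {m n : ℕ} {a b c : X}
    (h : RWalk R m a b) (h' : RWalk R n b c) : RWalk R (m + n) a c := by
  induction h with
  | nil a => simpa using h'
  | cons h w ih =>
    rw [Nat.succ_add]
    exact RWalk.cons h (ih h')

theorem RWalk.single {X : Type*} {R : X → X → Prop} {a b : X} (h : R a b) : RWalk R 1 a b :=
  RWalk.cons h (RWalk.nil b)

theorem RWalk.symm {X : Type*} {R : X → X → Prop} (hR : ∀ a b, R a b → R b a)
    {n : ℕ} {a b : X} (h : RWalk R n a b) : RWalk R n b a := by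
  induction h with
  | nil a => exact RWalk.nil a
  | cons h w ih => exact ih.trans (RWalk.single (hR _ _ h))

theorem RWalk.map {X : Type*} {R : X → X → Prop} (g : X → X) (hR : ∀ a b, R a b → R (g a) (g b))
    {n : ℕ} {a b : X} (h : RWalk R n a b) : RWalk R n (g a) (g b) := by
  induction h with
  | nil a => exact RWalk.nil _
  | cons h w ih => exact RWalk.cons (hR _ _ h) ih

theorem RWalk.head {X : Type*} {R : X → X → Prop} {n : ℕ} {a b a' : X} (h : RWalk R n a b)
    (hn : 0 < n) (hR : ∀ c, R a c → R a' c) : RWalk R n a' b := by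
  cases h with
  | nil => omega
  | cons h w => exact RWalk.cons (hR _ h) w

theorem RWalk.seq {X : Type*} {R : X → X → Prop} {n : ℕ} {a b : X} (h : RWalk R n a b) :
    ∃ p : ℕ → X, p 0 = a ∧ p n = b ∧ ∀ i < n, R (p i) (p (i + 1)) := by
  induction h with
  | nil a => exact ⟨fun _ => a, rfl, rfl, fun i hi => by omega⟩
  | @cons n a b c h w ih =>
    obtain ⟨p, h0, hn, hp⟩ := ih
    refine ⟨fun i => Nat.casesOn i a p, rfl, hn, fun i hi => ?_⟩
    cases i with
    | zero => simpa [h0] using h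
    | succ i => exact hp i (by omega)

theorem RWalk.of_seq {X : Type*} {R : X → X → Prop} {n : ℕ} (p : ℕ → X)
    (hp : ∀ i < n, R (p i) (p (i + 1))) (i m : ℕ) (hj : i + m ≤ n) :
    RWalk R m (p i) (p (i + m)) := by
  induction m with
  | zero => exact RWalk.nil _
  | succ m ih => exact (ih (by omega)).trans (RWalk.single (hp (i + m) (by omega)))

variable [CompleteSpace H]

/-- The data obtained from consistency. -/
structure GData (L : Set (Submodule ℂ H)) (Φ : (H →L[ℂ] H) → (H →L[ℂ] H))
    (U V : Submodule ℂ H → (H →ₗ[ℂ] H)) : Prop where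
  hL : IsCSL L
  hlin : IsLinearOnAlg L Φ
  hrank : RankPreserving L Φ
  hUV : ∀ M ∈ famF L, ∀ x ∈ M, ∀ f ∈ (minus L M)ᗮ, Φ (rankOne x f) = rankOne (U M x) (V M f)

theorem exists_gdata {L : Set (Submodule ℂ H)} {Φ : (H →L[ℂ] H) → (H →L[ℂ] H)}
    (hL : IsCSL L) (hlin : IsLinearOnAlg L Φ) (hrank : RankPreserving L Φ)
    (hcons : ∀ N ∈ famF L, Consistent L Φ N) :
    ∃ U V : Submodule ℂ H → (H →ₗ[ℂ] H), GData L Φ U V := by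
  have : ∀ M : Submodule ℂ H, ∃ UV : (H →ₗ[ℂ] H) × (H →ₗ[ℂ] H), M ∈ famF L →
      ∀ x ∈ M, ∀ f ∈ (minus L M)ᗮ, Φ (rankOne x f) = rankOne (UV.1 x) (UV.2 f) := by
    intro M
    by_cases hM : M ∈ famF L
    · obtain ⟨-, -, U, V, h⟩ := hcons M hM
      obtain ⟨U', hU'⟩ := LinearMap.exists_extend U
      obtain ⟨V', hV'⟩ := LinearMap.exists_extend V
      refine ⟨(U', V'), fun _ x hx f hf => ?_⟩
      have := h ⟨x, hx⟩ ⟨f, hf⟩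
      rw [← hU', ← hV'] at this
      exact this
    · exact ⟨0, fun h => absurd h hM⟩
  choose UV h using this
  exact ⟨fun M => (UV M).1, fun M => (UV M).2, hL, hlin, hrank, h⟩

theorem famF_exists_f {L : Set (Submodule ℂ H)} {M : Submodule ℂ H} (hM : M ∈ famF L) :
    ∃ f ∈ (minus L M)ᗮ, f ≠ 0 := by
  have hc : IsClosed (minus L M : Set H) := closedJoin_isClosed _
  have : CompleteSpace (minus L M) := hc.completeSpace_coe
  have : (minus L M)ᗮ ≠ ⊥ := fun h => hM.2.2 (Submodule.orthogonal_eq_bot_iff.1 h)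
  exact Submodule.exists_mem_ne_zero_of_ne_bot this

theorem famF_exists_x {L : Set (Submodule ℂ H)} {M : Submodule ℂ H} (hM : M ∈ famF L) :
    ∃ x ∈ M, x ≠ 0 := Submodule.exists_mem_ne_zero_of_ne_bot hM.2.1

theorem famF_of_le {L : Set (Submodule ℂ H)} {M K : Submodule ℂ H} (hM : M ∈ famF L)
    (hK : K ∈ L) (h0 : K ≠ ⊥) (h : K ≤ M) : K ∈ famF L :=
  ⟨hK, h0, fun h' => hM.2.2 (top_le_iff.1 (h' ▸ minus_mono h))⟩

theorem famF_inf {L : Set (Submodule ℂ H)} (hL : IsSubspaceLattice L) {M N : Submodule ℂ H}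
    (hM : M ∈ famF L) (hN : N ∈ famF L) (h : M ⊓ N ≠ ⊥) : M ⊓ N ∈ famF L := by
  refine famF_of_le hM ?_ h inf_le_left
  rw [← sInf_pair]
  refine hL.sInf_mem _ ?_
  rintro E (rfl | rfl)
  exacts [hM.1, hN.1]

theorem orth_join {L : Set (Submodule ℂ H)} {M N : Submodule ℂ H} (hL : IsSubspaceLattice L) :
    (minus L M)ᗮ ⊓ (minus L N)ᗮ ≤ (minus L (closedJoin {M, N}))ᗮ := by
  rw [Submodule.inf_orthogonal]
  intro f hf
  rw [Submodule.mem_orthogonal'] at hf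
  have hf' : minus L M ⊔ minus L N ≤ (Submodule.span ℂ {f})ᗮ := by
    intro u hu
    rw [Submodule.mem_orthogonal_singleton_iff_inner_right]
    exact hf u hu
  have : minus L (closedJoin {M, N}) ≤ (Submodule.span ℂ {f})ᗮ := by
    refine closedJoin_le (isClosed_orth _) fun E hE => ?_
    by_cases h : M ≤ E
    · by_cases h' : N ≤ E
      · exfalso
        refine hE.2 (closedJoin_le (hL.isClosed E hE.1) ?_)
        rintro K (rfl | rfl)
        exacts [h, h']
      · exact (le_minus hE.1 h').trans (le_sup_right.trans hf')
    · exact (le_minus hE.1 h).trans (le_sup_left.trans hf')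
  rw [Submodule.mem_orthogonal']
  intro u hu
  exact (Submodule.mem_orthogonal_singleton_iff_inner_right).1 (this hu)

theorem famF_join {L : Set (Submodule ℂ H)} (hL : IsSubspaceLattice L) {M N : Submodule ℂ H}
    (hM : M ∈ famF L) (hN : N ∈ famF L) (h : (minus L M)ᗮ ⊓ (minus L N)ᗮ ≠ ⊥) :
    closedJoin {M, N} ∈ famF L := by
  refine ⟨hL.join_mem _ ?_, ?_, ?_⟩
  · rintro E (rfl | rfl)
    exacts [hM.1, hN.1]
  · intro h0
    refine hM.2.1 (le_bot_iff.1 ?_)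
    rw [← h0]
    exact le_closedJoin (by simp)
  · intro h0
    refine h (le_bot_iff.1 ?_)
    have := orth_join (M := M) (N := N) hL
    rwa [h0, Submodule.top_orthogonal_eq_bot] at this

theorem orth_of_inf {L : Set (Submodule ℂ H)} (hL : IsCSL L) {M N : Submodule ℂ H}
    (hM : M ∈ L) (hN : N ∈ L) (h : M ⊓ N = ⊥) {x y : H} (hx : x ∈ M) (hy : y ∈ N) :
    (inner ℂ x y : ℂ) = 0 := by
  have hc := hL.isClosed M hM
  have h1 : projOf M y ∈ M ⊓ N := ⟨projOf_mem hc y, (BFam_of_mem hL hN).2 M hM y hy⟩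
  rw [h, Submodule.mem_bot] at h1
  rw [← projOf_self hc hx, projOf_inner hc, h1, inner_zero_right]

theorem orth_of_inf' {L : Set (Submodule ℂ H)} (hL : IsCSL L) {M N : Submodule ℂ H}
    (hM : M ∈ L) (hN : N ∈ L) (h : Mᗮ ⊓ Nᗮ = ⊥) {x y : H} (hx : x ∈ Mᗮ) (hy : y ∈ Nᗮ) :
    (inner ℂ x y : ℂ) = 0 := by
  have hc := hL.isClosed M hM
  have h1 : y - projOf M y ∈ Mᗮ ⊓ Nᗮ := ⟨sub_projOf_mem hc y,
    Submodule.sub_mem _ hy ((BFam_orth hL (BFam_of_mem hL hN)).2 M hM y hy)⟩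
  rw [h, Submodule.mem_bot, sub_eq_zero] at h1
  rw [h1]
  exact (Submodule.mem_orthogonal' _ _).1 hx _ (projOf_mem hc y)

namespace GData

variable {L : Set (Submodule ℂ H)} {Φ : (H →L[ℂ] H) → (H →L[ℂ] H)}
    {U V : Submodule ℂ H → (H →ₗ[ℂ] H)}

theorem nz (D : GData L Φ U V) {M : Submodule ℂ H} (hM : M ∈ famF L) {x f : H}
    (hx : x ∈ M) (hf : f ∈ (minus L M)ᗮ) (hx0 : x ≠ 0) (hf0 : f ≠ 0) :
    U M x ≠ 0 ∧ V M f ≠ 0 :=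
  image_ne_zero D.hrank (rankOne_mem hx hf) hx0 hf0 (D.hUV M hM x hx f hf)

theorem compat (D : GData L Φ U V) {M N : Submodule ℂ H} (hM : M ∈ famF L) (hN : N ∈ famF L)
    (h : M ≤ N) : ∃ d : ℂ, d ≠ 0 ∧ ∀ x ∈ M, U N x = d • U M x := by
  obtain ⟨f, hf, hf0⟩ := famF_exists_f hN
  obtain ⟨x₀, hx, hx0⟩ := famF_exists_x hM
  have hf' : f ∈ (minus L M)ᗮ := Submodule.orthogonal_le (minus_mono h) hf
  have hne := (D.nz hN (h hx) hf hx0 hf0)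
  have key : ∀ x ∈ M, U N x = ((inner ℂ (V N f) (V N f) : ℂ)⁻¹ * inner ℂ (V M f) (V N f)) • U M x := by
    intro x hx
    have h1 := (D.hUV N hN x (h hx) f hf).symm.trans (D.hUV M hM x hx f hf')
    have h2 := congrArg (fun T : H →L[ℂ] H => T (V N f)) h1
    simp only [rankOne_apply] at h2
    rw [mul_smul, ← h2, smul_smul, inv_mul_cancel₀ (inner_self_ne_zero.2 hne.2), one_smul]
  refine ⟨_, ?_, key⟩
  intro h0
  have := key x₀ hx
  rw [h0, zero_smul] at this
  exact hne.1 this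

end GData

/-- Agreement of scaled local maps. -/
def GAgree (U : Submodule ℂ H → (H →ₗ[ℂ] H)) (a b : Submodule ℂ H × ℂ) : Prop :=
  a.1 ≤ b.1 ∧ ∀ x ∈ a.1, a.2 • U a.1 x = b.2 • U b.1 x

/-- Nodes. -/
def GNode (L : Set (Submodule ℂ H)) (a : Submodule ℂ H × ℂ) : Prop := a.1 ∈ famF L ∧ a.2 ≠ 0

/-- A step: two nodes with a common upper bound node. -/
def GStep (L : Set (Submodule ℂ H)) (U : Submodule ℂ H → (H →ₗ[ℂ] H))
    (a b : Submodule ℂ H × ℂ) : Prop :=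
  GNode L a ∧ GNode L b ∧ ∃ k, GNode L k ∧ GAgree U a k ∧ GAgree U b k

/-- scaling -/
def gscale (t : ℂ) (a : Submodule ℂ H × ℂ) : Submodule ℂ H × ℂ := (a.1, t * a.2)

theorem GAgree.trans {U : Submodule ℂ H → (H →ₗ[ℂ] H)} {a b c : Submodule ℂ H × ℂ}
    (h : GAgree U a b) (h' : GAgree U b c) : GAgree U a c :=
  ⟨h.1.trans h'.1, fun x hx => (h.2 x hx).trans (h'.2 x (h.1 hx))⟩

theorem GAgree.scale {U : Submodule ℂ H → (H →ₗ[ℂ] H)} {a b : Submodule ℂ H × ℂ}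
    (h : GAgree U a b) (t : ℂ) : GAgree U (gscale t a) (gscale t b) :=
  ⟨h.1, fun x hx => by
    have := h.2 x hx
    simp only [gscale, mul_smul]
    rw [this]⟩

theorem GNode.scale {L : Set (Submodule ℂ H)} {a : Submodule ℂ H × ℂ} (h : GNode L a) {t : ℂ}
    (ht : t ≠ 0) : GNode L (gscale t a) := ⟨h.1, mul_ne_zero ht h.2⟩

theorem GStep.scale {L : Set (Submodule ℂ H)} {U : Submodule ℂ H → (H →ₗ[ℂ] H)}
    {a b : Submodule ℂ H × ℂ} (h : GStep L U a b) {t : ℂ} (ht : t ≠ 0) :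
    GStep L U (gscale t a) (gscale t b) := by
  obtain ⟨h1, h2, k, h3, h4, h5⟩ := h
  exact ⟨h1.scale ht, h2.scale ht, _, h3.scale ht, h4.scale t, h5.scale t⟩

theorem GStep.symm {L : Set (Submodule ℂ H)} {U : Submodule ℂ H → (H →ₗ[ℂ] H)}
    {a b : Submodule ℂ H × ℂ} (h : GStep L U a b) : GStep L U b a := by
  obtain ⟨h1, h2, k, h3, h4, h5⟩ := h
  exact ⟨h2, h1, k, h3, h5, h4⟩

theorem GStep.head {L : Set (Submodule ℂ H)} {U : Submodule ℂ H → (H →ₗ[ℂ] H)}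
    {a b a' : Submodule ℂ H × ℂ} (h : GStep L U a b) (ha' : GNode L a') (h' : GAgree U a' a) :
    GStep L U a' b := by
  obtain ⟨h1, h2, k, h3, h4, h5⟩ := h
  exact ⟨ha', h2, k, h3, h'.trans h4, h5⟩

/-- walk with modified endpoints -/
theorem gwalk_ends {L : Set (Submodule ℂ H)} {U : Submodule ℂ H → (H →ₗ[ℂ] H)} {n : ℕ}
    {a b a' b' : Submodule ℂ H × ℂ} (h : RWalk (GStep L U) n a b) (hn : 0 < n)
    (ha' : GNode L a') (h' : GAgree U a' a) (hb' : GNode L b') (h'' : GAgree U b' b) :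
    RWalk (GStep L U) n a' b' := by
  have h1 := h.head hn (a' := a') fun c hc => hc.head ha' h'
  have h2 := (h1.symm (fun _ _ => GStep.symm)).head hn (a' := b') fun c hc => hc.head hb' h''
  exact h2.symm fun _ _ => GStep.symm

namespace GData

variable {L : Set (Submodule ℂ H)} {Φ : (H →L[ℂ] H) → (H →L[ℂ] H)}
    {U V : Submodule ℂ H → (H →ₗ[ℂ] H)}

theorem down (D : GData L Φ U V) {M : Submodule ℂ H} (hM : M ∈ famF L)
    {a : Submodule ℂ H × ℂ} (ha : GNode L a) (h : M ≤ a.1) :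
    ∃ e : ℂ, GNode L (M, e) ∧ GAgree U (M, e) a := by
  obtain ⟨d, hd, h'⟩ := D.compat hM ha.1 h
  refine ⟨a.2 * d, ⟨hM, mul_ne_zero ha.2 hd⟩, h, fun x hx => ?_⟩
  show (a.2 * d) • U M x = _
  rw [h' x hx, smul_smul]

theorem up (D : GData L Φ U V) {N : Submodule ℂ H} (hN : N ∈ famF L)
    {a : Submodule ℂ H × ℂ} (ha : GNode L a) (h : a.1 ≤ N) :
    ∃ e : ℂ, GNode L (N, e) ∧ GAgree U a (N, e) := by
  obtain ⟨d, hd, h'⟩ := D.compat ha.1 hN h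
  refine ⟨a.2 * d⁻¹, ⟨hN, mul_ne_zero ha.2 (inv_ne_zero hd)⟩, h, fun x hx => ?_⟩
  show _ = (a.2 * d⁻¹) • U N x
  rw [h' x hx, smul_smul, inv_mul_cancel_right₀ hd]

theorem loop_disjoint (D : GData L Φ U V) (n : ℕ) (hn : 0 < n) (p k : ℕ → Submodule ℂ H × ℂ)
    (hp : ∀ i < n, GNode L (p i)) (hk : ∀ i < n, GNode L (k i))
    (h1 : ∀ i < n, GAgree U (p i) (k i)) (h2 : ∀ i < n, GAgree U (p (i + 1)) (k i))
    (hM : (p n).1 = (p 0).1) (hpn : (p n).2 ≠ 0)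
    (hd1 : ∀ i < n, ∀ j < n, i ≠ j → (p i).1 ⊓ (p j).1 = ⊥)
    (hd2 : ∀ i < n, ∀ j < n, i ≠ j → (minus L (k i).1)ᗮ ⊓ (minus L (k j).1)ᗮ = ⊥) :
    (p 0).2 = (p n).2 := by
  have hxe : ∀ i, ∃ x, i < n → x ∈ (p i).1 ∧ x ≠ 0 := by
    intro i
    by_cases hi : i < n
    · obtain ⟨x, hx⟩ := famF_exists_x (hp i hi).1
      exact ⟨x, fun _ => hx⟩
    · exact ⟨0, fun h => absurd h hi⟩
  choose x hx using hxe
  have hfe : ∀ i, ∃ f, i < n → f ∈ (minus L (k i).1)ᗮ ∧ f ≠ 0 := by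
    intro i
    by_cases hi : i < n
    · obtain ⟨x, hx⟩ := famF_exists_f (hk i hi).1
      exact ⟨x, fun _ => hx⟩
    · exact ⟨0, fun h => absurd h hi⟩
  choose f hf using hfe
  let t : ℂ := (p 0).2 / (p n).2
  let x' : ℕ → H := fun i => if i = n then t • x 0 else x i
  have hx'i : ∀ i < n, x' i = x i := fun i hi => if_neg (by omega)
  have hx'n : x' n = t • x 0 := if_pos rfl
  have hx' : ∀ i ≤ n, x' i ∈ (p i).1 := by
    intro i hi
    rcases Nat.lt_or_eq_of_le hi with h | rfl
    · rw [hx'i i h]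
      exact (hx i h).1
    · rw [hx'n, hM]
      exact Submodule.smul_mem _ _ (hx 0 hn).1
  have main : ∀ i < n, ∀ z ∈ (k i).1, Φ (rankOne z (f i)) =
      rankOne ((k i).2 • U (k i).1 z) ((starRingEnd ℂ (k i).2)⁻¹ • V (k i).1 (f i)) := by
    intro i hi z hz
    rw [rankOne_smul_smul _ (hk i hi).2]
    exact D.hUV _ (hk i hi).1 z hz _ (hf i hi).1
  have ht : t = 1 := by
    refine loop_rank D.hlin D.hrank n hn x' f (fun i => (p i).2 • U (p i).1 (x' i))
      (fun i => (starRingEnd ℂ (k i).2)⁻¹ • V (k i).1 (f i)) t ?_ ?_ ?_ ?_ ?_ ?_ ?_ ?_ ?_ ?_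
    · intro i hi
      rw [hx'i i hi]
      exact (hx i hi).2
    · exact fun i hi => (hf i hi).2
    · intro i hi j hj hij
      exact orth_of_inf D.hL (hp i hi).1.1 (hp j hj).1.1 (hd1 i hi j hj hij) (hx' i hi.le) (hx' j hj.le)
    · intro i hi j hj hij
      exact orth_of_inf' D.hL (minus_mem D.hL.toIsSubspaceLattice _)
        (minus_mem D.hL.toIsSubspaceLattice _) (hd2 i hi j hj hij) (hf i hi).1 (hf j hj).1
    · intro i hi
      exact rankOne_mem ((h1 i hi).1 (hx' i hi.le)) (hf i hi).1
    · intro i hi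
      exact rankOne_mem ((h2 i hi).1 (hx' (i + 1) hi)) (hf i hi).1
    · intro i hi
      rw [main i hi _ ((h1 i hi).1 (hx' i hi.le)), (h1 i hi).2 _ (hx' i hi.le)]
    · intro i hi
      rw [main i hi _ ((h2 i hi).1 (hx' (i + 1) hi)), (h2 i hi).2 _ (hx' (i + 1) hi)]
    · rw [hx'n, hx'i 0 hn]
    · rw [hx'n, hx'i 0 hn, hM, map_smul, smul_smul]
      congr 1
      exact mul_div_cancel₀ _ hpn
  rwa [div_eq_one_iff_eq hpn] at ht

theorem loop (D : GData L Φ U V) (n : ℕ) : ∀ (M : Submodule ℂ H) (c d : ℂ),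
    RWalk (GStep L U) n (M, c) (M, d) → c = d := by
  induction n using Nat.strong_induction_on with
  | _ n ih =>
  intro M c d hw
  rcases Nat.eq_zero_or_pos n with rfl | hn
  · cases hw
    rfl
  obtain ⟨p, hp0, hpn, hp⟩ := hw.seq
  have hnode : ∀ i ≤ n, GNode L (p i) := by
    intro i hi
    rcases Nat.lt_or_eq_of_le hi with h | rfl
    · exact (hp i h).1
    · obtain ⟨m, rfl⟩ : ∃ m, i = m + 1 := ⟨i - 1, by omega⟩
      exact (hp m (by omega)).2.1
  have hc : c ≠ 0 := by simpa [hp0] using (hnode 0 (by omega)).2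
  have hd : d ≠ 0 := by simpa [hpn] using (hnode n le_rfl).2
  have ht : d / c ≠ 0 := div_ne_zero hd hc
  have hwrap : gscale (d / c) (p 0) = p n := by
    rw [hp0, hpn, gscale]
    simp [div_mul_cancel₀ _ hc]
  -- the wrapped walk
  have wrap : ∀ i ≤ n, ∀ j ≤ n,
      RWalk (GStep L U) (n - j + i) (p j) (gscale (d / c) (p i)) := by
    intro i hi j hj
    have w1 := RWalk.of_seq p hp j (n - j) (by omega)
    have w2 := (RWalk.of_seq p hp 0 i (by omega)).map (gscale (d / c)) fun _ _ h => h.scale ht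
    rw [hwrap, Nat.zero_add] at w2
    rw [show j + (n - j) = n by omega] at w1
    exact w1.trans w2
  have fin : d / c = 1 → c = d := fun h => ((div_eq_one_iff_eq hc).1 h).symm
  by_cases hA : ∃ i j, i < j ∧ j < n ∧ (p i).1 ⊓ (p j).1 ≠ ⊥
  · obtain ⟨i, j, hij, hj, hne⟩ := hA
    have ni := hnode i (by omega)
    have nj := hnode j (by omega)
    have hK := famF_inf D.hL.toIsSubspaceLattice ni.1 nj.1 hne
    obtain ⟨e, he, hae⟩ := D.down hK ni inf_le_left
    obtain ⟨e', he', hae'⟩ := D.down hK nj inf_le_right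
    have w1 := RWalk.of_seq p hp i (j - i) (by omega)
    rw [show i + (j - i) = j by omega] at w1
    have e1 := ih _ (by omega) _ _ _ (gwalk_ends w1 (by omega) he hae he' hae')
    have e2 := ih _ (by omega) _ _ _ (gwalk_ends (wrap i (by omega) j (by omega)) (by omega)
      he' hae' (he.scale ht) (hae.scale _))
    apply fin
    rw [← e1] at e2
    exact mul_right_cancel₀ he.2 (by rw [one_mul]; exact e2.symm)
  have hk : ∀ i, ∃ k, i < n → GNode L k ∧ GAgree U (p i) k ∧ GAgree U (p (i + 1)) k := by
    intro i
    by_cases hi : i < n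
    · obtain ⟨-, -, k, hk⟩ := hp i hi
      exact ⟨k, fun _ => hk⟩
    · exact ⟨(⊥, 0), fun h => absurd h hi⟩
  choose k hk using hk
  by_cases hB : ∃ i j, i < j ∧ j < n ∧ (minus L (k i).1)ᗮ ⊓ (minus L (k j).1)ᗮ ≠ ⊥
  · obtain ⟨i, j, hij, hj, hne⟩ := hB
    obtain ⟨ki, kai, kai'⟩ := hk i (by omega)
    obtain ⟨kj, kaj, kaj'⟩ := hk j (by omega)
    have hK := famF_join D.hL.toIsSubspaceLattice ki.1 kj.1 hne
    obtain ⟨e, he, hae⟩ := D.up hK ki (le_closedJoin (by simp))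
    obtain ⟨e', he', hae'⟩ := D.up hK kj (le_closedJoin (by simp))
    have he0 : e ≠ 0 := he.2
    have he0' : e' ≠ 0 := he'.2
    have hr : e' / e ≠ 0 := div_ne_zero he0' he0
    have w1 := RWalk.of_seq p hp (i + 1) (j - i - 1) (by omega)
    rw [show i + 1 + (j - i - 1) = j by omega] at w1
    have s1 : GStep L U (p j) (gscale (e' / e) (p (i + 1))) := by
      refine ⟨hnode j (by omega), (hnode (i + 1) (by omega)).scale hr, _, he', kaj.trans hae', ?_⟩
      have := (kai'.trans hae).scale (e' / e)
      simpa [gscale, div_mul_cancel₀ _ he0] using this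
    have e1 := ih _ (by omega) _ _ _ (w1.trans (RWalk.single s1))
    -- second loop
    have w2 := wrap i (by omega) (j + 1) (by omega)
    have hr2 : (d / c * e) / e' ≠ 0 := div_ne_zero (mul_ne_zero ht he0) he0'
    have s2 : GStep L U (gscale (d / c) (p i)) (gscale ((d / c * e) / e') (p (j + 1))) := by
      refine ⟨(hnode i (by omega)).scale ht, (hnode (j + 1) (by omega)).scale hr2, _,
        he.scale ht, (kai.trans hae).scale _, ?_⟩
      have := (kaj'.trans hae').scale ((d / c * e) / e')
      simpa [gscale, div_mul_cancel₀ _ he0'] using this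
    have e2 := ih _ (by omega) _ _ _ (w2.trans (RWalk.single s2))
    have f1 : e' / e = 1 :=
      mul_right_cancel₀ (hnode (i + 1) (by omega)).2 (by rw [one_mul]; exact e1.symm)
    have f2 : (d / c * e) / e' = 1 :=
      mul_right_cancel₀ (hnode (j + 1) (by omega)).2 (by rw [one_mul]; exact e2.symm)
    apply fin
    rw [div_eq_one_iff_eq he0] at f1
    rw [f1, mul_div_cancel_right₀ _ he0] at f2
    exact f2
  push Not at hA hB
  have := D.loop_disjoint n hn p k (fun i hi => hnode i hi.le) (fun i hi => (hk i hi).1)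
    (fun i hi => (hk i hi).2.1) (fun i hi => (hk i hi).2.2) (by rw [hp0, hpn])
    (hnode n le_rfl).2 ?_ ?_
  · simpa [hp0, hpn] using this
  · intro i hi j hj hij
    rcases Nat.lt_or_gt_of_ne hij with h | h
    · exact hA i j h hj
    · rw [inf_comm]
      exact hA j i h hi
  · intro i hi j hj hij
    rcases Nat.lt_or_gt_of_ne hij with h | h
    · exact hB i j h hj
    · rw [inf_comm]
      exact hB j i h hi

end GData

end Aux3

section Aux4

/-- Finite consistency for gluing. -/
theorem glue_sum {E : Type*} [AddCommGroup E] [Module ℂ E] {ι : Type*} (S : ι → Submodule ℂ E)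
    (p : ι → E →ₗ[ℂ] E) (hp1 : ∀ i x, p i x ∈ S i) (hp2 : ∀ i, ∀ x ∈ S i, p i x = x)
    (hp3 : ∀ i j, ∀ x ∈ S j, p i x ∈ S j) (G : ι → E →ₗ[ℂ] E)
    (hG : ∀ i j x, x ∈ S i → x ∈ S j → G i x = G j x) [DecidableEq ι] (s : Finset ι) :
    ∀ (x : ι → E), (∀ i ∈ s, x i ∈ S i) → ∑ i ∈ s, x i = 0 → ∑ i ∈ s, G i (x i) = 0 := by
  induction s using Finset.induction_on with
  | empty => simp
  | insert a s ha ih =>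
    intro x hx h0
    rw [Finset.sum_insert ha] at h0 ⊢
    have hxa := hx a (Finset.mem_insert_self _ _)
    have hxs : ∀ i ∈ s, x i ∈ S i := fun i hi => hx i (Finset.mem_insert_of_mem hi)
    have h1 : x a + ∑ i ∈ s, p a (x i) = 0 := by
      have := congrArg (p a) h0
      rwa [map_add, map_sum, map_zero, hp2 a _ hxa] at this
    have h2 : ∑ i ∈ s, (x i - p a (x i)) = 0 := by
      rw [Finset.sum_sub_distrib, sub_eq_zero]
      exact add_left_cancel (h0.trans h1.symm)
    have h3 := ih (fun i => x i - p a (x i))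
      (fun i hi => Submodule.sub_mem _ (hxs i hi) (hp3 a i _ (hxs i hi))) h2
    have h4 : ∑ i ∈ s, G i (p a (x i)) = ∑ i ∈ s, G a (p a (x i)) :=
      Finset.sum_congr rfl fun i hi => hG i a _ (hp3 a i _ (hxs i hi)) (hp1 _ _)
    have h5 := congrArg (G a) h1
    rw [map_add, map_sum, map_zero, ← h4] at h5
    simp only [map_sub, Finset.sum_sub_distrib] at h3
    rw [sub_eq_zero.1 h3]
    exact h5

theorem glue_lin {E : Type*} [AddCommGroup E] [Module ℂ E] {ι : Type*} (S : ι → Submodule ℂ E)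
    (p : ι → E →ₗ[ℂ] E) (hp1 : ∀ i x, p i x ∈ S i) (hp2 : ∀ i, ∀ x ∈ S i, p i x = x)
    (hp3 : ∀ i j, ∀ x ∈ S j, p i x ∈ S j) (G : ι → E →ₗ[ℂ] E)
    (hG : ∀ i j x, x ∈ S i → x ∈ S j → G i x = G j x) :
    ∃ g : E →ₗ[ℂ] E, ∀ i, ∀ x ∈ S i, g x = G i x := by
  classical
  let T : (Π₀ i, S i) →ₗ[ℂ] E := DFinsupp.lsum ℕ fun i => (S i).subtype
  let T' : (Π₀ i, S i) →ₗ[ℂ] E := DFinsupp.lsum ℕ fun i => (G i).comp (S i).subtype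
  have hker : LinearMap.ker T ≤ LinearMap.ker T' := by
    intro v hv
    rw [LinearMap.mem_ker] at hv ⊢
    have e1 : T v = ∑ i ∈ v.support, (v i : E) := by
      simp only [T, DFinsupp.lsum_apply_apply, DFinsupp.sumAddHom_apply, DFinsupp.sum]
      rfl
    have e2 : T' v = ∑ i ∈ v.support, G i (v i : E) := by
      simp only [T', DFinsupp.lsum_apply_apply, DFinsupp.sumAddHom_apply, DFinsupp.sum]
      rfl
    rw [e2]
    rw [e1] at hv
    exact glue_sum S p hp1 hp2 hp3 G hG _ (fun i => (v i : E)) (fun i _ => (v i).2) hv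
  let T₁ := (LinearMap.ker T).liftQ T le_rfl
  have hT₁ : LinearMap.ker T₁ = ⊥ := Submodule.ker_liftQ_eq_bot _ _ _ le_rfl
  obtain ⟨q, hq⟩ := T₁.exists_leftInverse_of_injective hT₁
  obtain ⟨g, hg⟩ : ∃ g : E →ₗ[ℂ] E, g.comp T = T' := by
    refine ⟨((LinearMap.ker T).liftQ T' hker).comp q, ?_⟩
    refine LinearMap.ext fun v => ?_
    have h1 := congrArg (fun F => F (Submodule.Quotient.mk v)) hq
    have h2 : q (T v) = Submodule.Quotient.mk v := h1
    show ((LinearMap.ker T).liftQ T' hker) (q (T v)) = T' v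
    rw [h2]
    rfl
  refine ⟨g, fun i x hx => ?_⟩
  have := congrArg (fun F => F (DFinsupp.single i ⟨x, hx⟩)) hg
  simpa [T, T'] using this

variable {H : Type*} [NormedAddCommGroup H] [InnerProductSpace ℂ H] [CompleteSpace H]

namespace GData

variable {L : Set (Submodule ℂ H)} {Φ : (H →L[ℂ] H) → (H →L[ℂ] H)}
    {U V : Submodule ℂ H → (H →ₗ[ℂ] H)}

theorem exists_scalars (D : GData L Φ U V) : ∃ c : famF L → ℂ, (∀ M, c M ≠ 0) ∧
    ∀ M N : famF L, M.1 ≤ N.1 → ∀ x ∈ M.1, c M • U M.1 x = c N • U N.1 x := by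
  let r : famF L → famF L → Prop := fun M N => ∃ n c, RWalk (GStep L U) n (M.1, 1) (N.1, c)
  have nz : ∀ {n} {a b : Submodule ℂ H × ℂ}, RWalk (GStep L U) n a b → a.2 ≠ 0 → b.2 ≠ 0 := by
    intro n a b h
    induction h with
    | nil a => exact id
    | cons h w ih => exact fun _ => ih h.2.1.2
  have sc : ∀ {n} {a b : Submodule ℂ H × ℂ} {t : ℂ}, t ≠ 0 → RWalk (GStep L U) n a b →
      RWalk (GStep L U) n (gscale t a) (gscale t b) := fun ht w =>
    w.map _ fun _ _ h => h.scale ht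
  have eqv : Equivalence r := by
    refine ⟨fun M => ⟨0, 1, RWalk.nil _⟩, ?_, ?_⟩
    · rintro M N ⟨n, c, w⟩
      have hc : c ≠ 0 := nz w one_ne_zero
      refine ⟨n, c⁻¹, ?_⟩
      have := sc (inv_ne_zero hc) (w.symm fun _ _ => GStep.symm)
      simpa [gscale, inv_mul_cancel₀ hc] using this
    · rintro M N P ⟨n, c, w⟩ ⟨m, d, w'⟩
      have hc : c ≠ 0 := nz w one_ne_zero
      have := sc hc w'
      simp only [gscale, mul_one] at this
      exact ⟨_, _, w.trans this⟩
  let s : Setoid (famF L) := ⟨r, eqv⟩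
  let b : famF L → famF L := fun M => (Quotient.mk s M).out
  have hb : ∀ M, r (b M) M := fun M => Quotient.exact (s := s) (Quotient.out_eq _)
  choose n c w using hb
  refine ⟨c, fun M => nz (w M) one_ne_zero, fun M N hMN => ?_⟩
  have hcM : c M ≠ 0 := nz (w M) one_ne_zero
  obtain ⟨e, he, hae⟩ := D.up N.2 (a := (M.1, c M)) ⟨M.2, hcM⟩ hMN
  have st : GStep L U (M.1, c M) (N.1, e) :=
    ⟨⟨M.2, hcM⟩, he, (N.1, e), he, hae, le_rfl, fun _ _ => rfl⟩
  have hbb : b M = b N := by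
    have : r M N := by
      have hs : GStep L U (M.1, 1) (N.1, (c M)⁻¹ * e) := by
        have := st.scale (inv_ne_zero hcM)
        simpa [gscale, inv_mul_cancel₀ hcM] using this
      exact ⟨1, _, RWalk.single hs⟩
    exact congrArg Quotient.out (Quotient.sound (s := s) this)
  have w1 := (w M).trans (RWalk.single st)
  rw [hbb] at w1
  have w2 := ((w N).symm fun _ _ => GStep.symm).trans w1
  have := D.loop _ _ _ _ w2
  rw [this]
  exact hae.2

theorem exists_glue (D : GData L Φ U V) : ∃ u v : H →ₗ[ℂ] H,
    ∀ M ∈ famF L, ∀ x ∈ M, ∀ f ∈ (minus L M)ᗮ, Φ (rankOne x f) = rankOne (u x) (v f) := by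
  obtain ⟨c, hc, hcU⟩ := D.exists_scalars
  have hLs := D.hL.toIsSubspaceLattice
  let U' : famF L → H →ₗ[ℂ] H := fun M => c M • U M.1
  let V' : famF L → H →ₗ[ℂ] H := fun M => (starRingEnd ℂ (c M))⁻¹ • V M.1
  have hUV : ∀ M : famF L, ∀ x ∈ M.1, ∀ f ∈ (minus L M.1)ᗮ,
      Φ (rankOne x f) = rankOne (U' M x) (V' M f) := by
    intro M x hx f hf
    show _ = rankOne (c M • U M.1 x) ((starRingEnd ℂ (c M))⁻¹ • V M.1 f)
    rw [rankOne_smul_smul _ (hc M)]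
    exact D.hUV _ M.2 x hx f hf
  have hU : ∀ M N : famF L, M.1 ≤ N.1 → ∀ x ∈ M.1, U' M x = U' N x := hcU
  have hV : ∀ M N : famF L, M.1 ≤ N.1 → ∀ f ∈ (minus L N.1)ᗮ, V' M f = V' N f := by
    intro M N hMN f hf
    have hf' : f ∈ (minus L M.1)ᗮ := Submodule.orthogonal_le (minus_mono hMN) hf
    obtain ⟨x, hx, hx0⟩ := famF_exists_x M.2
    obtain ⟨f₀, hf₀, hf0⟩ := famF_exists_f M.2
    have hUx : U' M x ≠ 0 := smul_ne_zero (hc M) (D.nz M.2 hx hf₀ hx0 hf0).1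
    have h1 := (hUV M x hx f hf').symm.trans (hUV N x (hMN hx) f hf)
    rw [← hU M N hMN x hx] at h1
    refine ext_inner_right ℂ fun z => ?_
    have h2 := congrArg (fun T : H →L[ℂ] H => T z) h1
    simp only [rankOne_apply] at h2
    exact smul_left_injective ℂ hUx h2
  obtain ⟨u, hu⟩ := glue_lin (fun M : famF L => M.1) (fun M => (projOf M.1 : H →ₗ[ℂ] H))
    (fun M x => projOf_mem (hLs.isClosed _ M.2.1) x)
    (fun M x hx => projOf_self (hLs.isClosed _ M.2.1) hx)
    (fun M N x hx => (BFam_of_mem D.hL N.2.1).2 _ M.2.1 x hx) U' (by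
      intro M N x hM hN
      by_cases h : M.1 ⊓ N.1 = ⊥
      · have hx : x ∈ M.1 ⊓ N.1 := ⟨hM, hN⟩
        rw [h, Submodule.mem_bot] at hx
        rw [hx, map_zero, map_zero]
      · have hK := famF_inf hLs M.2 N.2 h
        rw [← hU ⟨_, hK⟩ M inf_le_left x ⟨hM, hN⟩, ← hU ⟨_, hK⟩ N inf_le_right x ⟨hM, hN⟩])
  obtain ⟨v, hv⟩ := glue_lin (fun M : famF L => (minus L M.1)ᗮ)
    (fun M => LinearMap.id - (projOf (minus L M.1) : H →ₗ[ℂ] H))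
    (fun M x => sub_projOf_mem (closedJoin_isClosed _) x)
    (fun M x hx => by
      have : projOf (minus L M.1) x = 0 :=
        projOf_unique (closedJoin_isClosed _) (Submodule.zero_mem _) (by rw [sub_zero]; exact hx)
      simp [this])
    (fun M N x hx => Submodule.sub_mem _ hx
      ((BFam_orth D.hL (BFam_of_mem D.hL (minus_mem hLs N.1))).2 _ (minus_mem hLs M.1) x hx)) V' (by
      intro M N x hM hN
      by_cases h : (minus L M.1)ᗮ ⊓ (minus L N.1)ᗮ = ⊥
      · have hx : x ∈ (minus L M.1)ᗮ ⊓ (minus L N.1)ᗮ := ⟨hM, hN⟩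
        rw [h, Submodule.mem_bot] at hx
        rw [hx, map_zero, map_zero]
      · have hK := famF_join hLs M.2 N.2 h
        have hx := orth_join hLs (show x ∈ _ ⊓ _ from ⟨hM, hN⟩)
        rw [hV M ⟨_, hK⟩ (le_closedJoin (by simp)) x hx, hV N ⟨_, hK⟩ (le_closedJoin (by simp)) x hx])
  refine ⟨u, v, fun M hM x hx f hf => ?_⟩
  rw [hu ⟨M, hM⟩ x hx, hv ⟨M, hM⟩ f hf]
  exact hUV ⟨M, hM⟩ x hx f hf

end GData

end Aux4

section Aux5

variable {H : Type*} [NormedAddCommGroup H] [InnerProductSpace ℂ H] [CompleteSpace H]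
  [TopologicalSpace.SeparableSpace H]

theorem dense_famF {L : Set (Submodule ℂ H)} (hL : IsSubspaceLattice L)
    (hcd : IsCompletelyDistributive L) : Dense ((sSup (famF L) : Submodule ℂ H) : Set H) := by
  rw [Submodule.dense_iff_topologicalClosure_eq_top, eq_top_iff]
  intro x _
  refine cd_le hL hcd (N := closedJoin (famF L)) (hL.join_mem _ fun _ h => h.1) x ?_
  intro M hM hMN
  by_contra hx
  refine hMN (le_closedJoin ⟨hM, ?_, ?_⟩)
  · rintro rfl
    exact hMN bot_le
  · intro h
    rw [h] at hx
    exact hx trivial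

theorem dense_orth {L : Set (Submodule ℂ H)} (hL : IsSubspaceLattice L)
    (hcd : IsCompletelyDistributive L) :
    Dense ((⨆ M : famF L, (minus L M.1)ᗮ : Submodule ℂ H) : Set H) := by
  rw [Submodule.dense_iff_topologicalClosure_eq_top, Submodule.topologicalClosure_eq_top_iff,
    eq_bot_iff]
  intro x hx
  refine cd_le hL hcd hL.bot_mem x ?_
  intro M hM hMN
  by_cases hF : M ∈ famF L
  · have hc : IsClosed (minus L M : Set H) := closedJoin_isClosed _
    have : CompleteSpace (minus L M) := hc.completeSpace_coe
    rw [← Submodule.orthogonal_orthogonal (minus L M)]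
    exact Submodule.orthogonal_le (le_iSup (fun M : famF L => (minus L M.1)ᗮ) ⟨M, hF⟩) hx
  · by_contra hx
    refine hF ⟨hM, ?_, ?_⟩
    · rintro rfl
      exact hMN bot_le
    · intro h
      rw [h] at hx
      exact hx trivial

theorem wot_zero {L : Set (Submodule ℂ H)} (hL : IsCSL L) (hcd : IsCompletelyDistributive L)
    {ι : Type*} [Fintype ι] (x y : ι → H)
    (h : ∀ M ∈ famF L, ∀ u ∈ M, ∀ f ∈ (minus L M)ᗮ,
      ∑ i, (inner ℂ (y i) (rankOne u f (x i)) : ℂ) = 0)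
    (A : H →L[ℂ] H) (hA : A ∈ algL L) : ∑ i, (inner ℂ (y i) (A (x i)) : ℂ) = 0 := by
  have h1 := trace_zero hL hcd (fun i => A (x i)) y ?_
  · have h2 := congrArg (starRingEnd ℂ) h1
    rw [map_sum, map_zero] at h2
    rw [← h2]
    exact Finset.sum_congr rfl fun i _ => (inner_conj_symm _ _).symm
  intro M hM u hu f hf
  by_cases hF : M ∈ famF L
  · have hf' : ContinuousLinearMap.adjoint A f ∈ (minus L M)ᗮ := by
      rw [Submodule.mem_orthogonal']
      intro z hz
      rw [ContinuousLinearMap.adjoint_inner_left]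
      exact (Submodule.mem_orthogonal' _ _).1 hf _
        (hA _ (minus_mem hL.toIsSubspaceLattice M) z hz)
    rw [← h M hF u hu _ hf']
    refine Finset.sum_congr rfl fun i _ => ?_
    rw [rankOne_apply, inner_smul_right, ContinuousLinearMap.adjoint_inner_left]
  · by_cases h0 : M = ⊥
    · rw [h0, Submodule.mem_bot] at hu
      simp [hu]
    · have ht : minus L M = ⊤ := by
        by_contra ht
        exact hF ⟨hM, h0, ht⟩
      rw [ht, Submodule.top_orthogonal_eq_bot, Submodule.mem_bot] at hf
      simp [hf]

theorem wot_repr {L : Set (Submodule ℂ H)} {Φ : (H →L[ℂ] H) → (H →L[ℂ] H)}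
    (hlin : IsLinearOnAlg L Φ) (hwot : WOTContinuousOn L Φ) (h k h' k' : H) :
    ∃ (s : Finset (H × H)) (x y : s → H), ∀ A ∈ algL L,
      (inner ℂ k (Φ A h) : ℂ) - inner ℂ k' (A h') = ∑ i, (inner ℂ (y i) (A (x i)) : ℂ) := by
  let F : H × H → (algSub L →ₗ[ℂ] ℂ) := fun q =>
    { toFun := fun A => inner ℂ q.2 (A.1 q.1)
      map_add' := fun A B => by simp [inner_add_right]
      map_smul' := fun c A => by simp [inner_smul_right] }
  let ψ : algSub L →ₗ[ℂ] ℂ :=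
    { toFun := fun A => inner ℂ k (linPhi hlin A h)
      map_add' := fun A B => by simp [inner_add_right]
      map_smul' := fun c A => by simp [inner_smul_right] }
  have hψ : ψ ∈ Submodule.span ℂ (Set.range F) := by
    rw [LinearMap.mem_span_iff_continuous]
    letI t : TopologicalSpace (algSub L) := ⨅ i, TopologicalSpace.induced (F i) inferInstance
    have c1 : Continuous fun A : algSub L => (ContinuousLinearMapWOT.ofCLM A.1 : H →WOT[ℂ] H) := by
      rw [ContinuousLinearMapWOT.continuous_iff]
      intro x y
      exact continuous_iInf_dom (i := (x, y)) continuous_induced_dom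
    have c2 := ContinuousOn.comp_continuous hwot c1 fun A => ⟨A.1, A.2, rfl⟩
    rw [ContinuousLinearMapWOT.continuous_iff] at c2
    exact c2 h k
  have hθ : ψ - F (h', k') ∈ Submodule.span ℂ (Set.range F) :=
    Submodule.sub_mem _ hψ (Submodule.subset_span ⟨_, rfl⟩)
  rw [Finsupp.mem_span_range_iff_exists_finsupp] at hθ
  obtain ⟨c, hc⟩ := hθ
  refine ⟨c.support, fun i => i.1.1, fun i => starRingEnd ℂ (c i.1) • i.1.2, ?_⟩
  intro A hA
  have h1 := congrArg (fun G => G (⟨A, hA⟩ : algSub L)) hc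
  have h2 : (ψ - F (h', k')) ⟨A, hA⟩ = (inner ℂ k (Φ A h) : ℂ) - inner ℂ k' (A h') := rfl
  rw [← h2, ← h1]
  simp only [Finsupp.sum, LinearMap.sum_apply, LinearMap.smul_apply, inner_smul_left,
    Complex.conj_conj, smul_eq_mul]
  exact (Finset.sum_coe_sort c.support fun i => c i * (F i) ⟨A, hA⟩).symm

end Aux5

/-- (Main Theorem) -/
theorem stmt_15 {H : Type*} [NormedAddCommGroup H] [InnerProductSpace ℂ H]
    [CompleteSpace H] [TopologicalSpace.SeparableSpace H]
    (L : Set (Submodule ℂ H)) (hL : IsCSL L) (hcd : IsCompletelyDistributive L)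
    (Φ : (H →L[ℂ] H) → (H →L[ℂ] H)) (hlin : IsLinearOnAlg L Φ)
    (hwot : WOTContinuousOn L Φ) (hrank : RankPreserving L Φ)
    (hcons : ∀ N ∈ famF L, Consistent L Φ N) :
    ∃ U V : H →ₗ.[ℂ] H,
      Dense (U.domain : Set H) ∧ Dense (V.domain : Set H) ∧
      (∀ (x : U.domain) (f : V.domain) (M : Submodule ℂ H), M ∈ famF L →
          (x : H) ∈ M → (f : H) ∈ (minus L M)ᗮ →
          Φ (rankOne (x : H) (f : H)) = rankOne (U x) (V f)) ∧
      (∀ A ∈ algL L, ∀ (h : V.adjoint.domain) (k : U.adjoint.domain),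
          (inner ℂ (Φ A (h : H)) (k : H) : ℂ)
            = inner ℂ (A ((V.adjoint h : H))) ((U.adjoint k : H))) := by
  obtain ⟨u₀, v₀, D⟩ := exists_gdata hL hlin hrank hcons
  obtain ⟨u, v, huv⟩ := D.exists_glue
  have hLs := hL.toIsSubspaceLattice
  let U : H →ₗ.[ℂ] H := ⟨sSup (famF L), u.comp (Submodule.subtype _)⟩
  let V : H →ₗ.[ℂ] H := ⟨⨆ M : famF L, (minus L M.1)ᗮ, v.comp (Submodule.subtype _)⟩
  have hU : Dense (U.domain : Set H) := dense_famF hLs hcd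
  have hV : Dense (V.domain : Set H) := dense_orth hLs hcd
  refine ⟨U, V, hU, hV, fun x f M hM hx hf => huv M hM x hx f hf, fun A hA h k => ?_⟩
  have aU := LinearPMap.adjoint_isFormalAdjoint hU
  have aV := LinearPMap.adjoint_isFormalAdjoint hV
  obtain ⟨s, x, y, hxy⟩ := wot_repr hlin hwot (h : H) (k : H) (V.adjoint h) (U.adjoint k)
  have key := wot_zero hL hcd x y (fun M hM w hw f hf => by
    rw [← hxy _ (rankOne_mem hw hf), huv M hM w hw f hf, rankOne_apply, rankOne_apply,
      inner_smul_right, inner_smul_right, sub_eq_zero]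
    have hw' : w ∈ U.domain := le_sSup hM hw
    have hf' : f ∈ V.domain := le_iSup (fun M : famF L => (minus L M.1)ᗮ) ⟨M, hM⟩ hf
    have e1 : (inner ℂ (U.adjoint k) w : ℂ) = inner ℂ (k : H) (u w) := aU k ⟨w, hw'⟩
    have e2 : (inner ℂ (V.adjoint h) f : ℂ) = inner ℂ (h : H) (v f) := aV h ⟨f, hf'⟩
    rw [e1, ← inner_conj_symm (v f) (h : H), ← e2, inner_conj_symm]) A hA
  rw [← hxy A hA, sub_eq_zero] at key
  rw [← inner_conj_symm, key, inner_conj_symm]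
end

section
/- (Longstaff) Let L be a subspace lattice on a complex separable Hilbert space H and let x, f be nonzero vectors in H. Then the rank one operator x⊗f* belongs to Alg L if and only if there is a subspace E ∈ L such that x ∈ E and f ∈ E₋^⊥. -/
open scoped InnerProductSpace

/-- (Longstaff) `x ⊗ f* ∈ Alg L` iff there is `E ∈ L` with `x ∈ E` and `f ∈ E₋ᗮ`. -/
theorem stmt_17 {H : Type*} [NormedAddCommGroup H] [InnerProductSpace ℂ H]
    [CompleteSpace H] [TopologicalSpace.SeparableSpace H]
    (L : Set (Submodule ℂ H)) (hL : IsSubspaceLattice L)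
    (x f : H) (hx : x ≠ 0) (hf : f ≠ 0) :
    rankOne x f ∈ algL L ↔ ∃ E ∈ L, x ∈ E ∧ f ∈ (minus L E)ᗮ := by
  have key : ∀ h : H, rankOne x f h = (inner ℂ f h) • x := fun h => rfl
  constructor
  · intro hT
    refine ⟨sInf {E | E ∈ L ∧ x ∈ E}, hL.sInf_mem _ (fun E hE => hE.1), ?_, ?_⟩
    · rw [Submodule.mem_sInf]
      exact fun E hE => hE.2
    · have h1 : minus L (sInf {E | E ∈ L ∧ x ∈ E}) ≤ (ℂ ∙ f)ᗮ := by
        refine Submodule.topologicalClosure_minimal _ ?_ (Submodule.isClosed_orthogonal _)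
        refine sSup_le ?_
        rintro F ⟨hF, hn⟩ y hy
        rw [Submodule.mem_orthogonal_singleton_iff_inner_right]
        by_contra hne
        apply hn
        refine sInf_le ⟨hF, ?_⟩
        have h2 := hT F hF y hy
        rw [key] at h2
        exact (F.smul_mem_iff hne).1 h2
      rw [Submodule.mem_orthogonal]
      intro u hu
      exact (Submodule.mem_orthogonal_singleton_iff_inner_left).1 (h1 hu)
  · rintro ⟨E, hE, hxE, hfE⟩ F hF y hy
    rw [key]
    by_cases h : E ≤ F
    · exact F.smul_mem _ (h hxE)
    · have hy' : y ∈ minus L E :=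
        Submodule.le_topologicalClosure _
          ((le_sSup (show F ∈ {E' | E' ∈ L ∧ ¬ E ≤ E'} from ⟨hF, h⟩) : F ≤ _) hy)
      rw [(Submodule.mem_orthogonal' _ _).1 hfE y hy', zero_smul]
      exact F.zero_mem
end
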